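/- An N-tuple (A₁,…,A_N) of matrices in SL(2,ℝ) is uniformly hyperbolic with respect to the full shift on N symbols if and only if there exists an open set M ⊂ ℙ¹ with M ≠ ∅ and closure(M) ≠ ℙ¹ such that A_α(closure M) ⊆ M for every α ∈ {1,…,N}. Moreover, when such a set exists it can be chosen to have finitely many connected components whose closures are pairwise disjoint. -/

import Mathlib

/-!
Vectors of `ℝ²` carry the sup norm of `Fin 2 → ℝ` and matrices are measured by their largest entry
`maxEntry`; both are equivalent to the Euclidean quantities, so uniform hyperbolicity is unaffected.
The area form `v ∧ u` is `SL(2,ℝ)`-invariant, and is the basic tool throughout.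

*A multicone forces hyperbolicity.* Let `M` be strictly invariant. The number
`sup |p ∧ q| / (|x ∧ p| |x ∧ q|)`, over directions `p`, `q` outside `M`, is a Hilbert-type metric
density on the cone over `M`, quadratic in `1 / ‖x‖`. By compactness the images of `closure M` are
uniformly transverse to the complement of `M`, so every `A i` contracts this density by a fixed
factor (`HilbertBound.step`). Hence it decays exponentially along words, while it is at least of
order `1 / ‖A_w x‖ ^ 2`; so `‖A_w‖` grows exponentially (`unifHyp_of_multicone`). No connectedness
of `M` is used.

*Hyperbolicity gives a multicone.* Suppose `maxEntry A_w ≥ c λ^|w|`, and let `1 < μ < λ`. Write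
`f_w(v) = ‖A_w v‖ / μ^|w|` and let `g_w` be the same function for the inverse matrices; this is
`rate`. Two facts carry the proof.
* If a long word satisfies `f_w(v) ≤ 1` for a unit vector `v`, a word of bounded length makes `f`
  small at `v`. The directions most contracted by the prefixes of `w` form a sequence with
  summable increments, so a prefix of size about `T` already contracts `v` to length
  `O(log T / T)` (`exists_short_contracting`, `UnifGrowth.exists_short`).
* No `v` is contracted both by a word of the `A i` and by a word of their inverses: the prefixes
  given by the first fact would combine to a word of length at least of order `log T` whose product
  has size only `O(log T)` (`UnifGrowth.exists_not_both`).

Consequently `M = {v | min g_w(v) < min f_w(v)}`, with minima over words of length at most `n`, is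
for large `n` insensitive to the truncation. Prepending a letter `i` divides the minimum of `g` at
`A_i v` by at least `μ` and lets the minimum of `f` grow by at least `μ`, which gives strict
invariance even under the weak inequality that holds on the closure (`inCone_mulVec`).

*Finitely many components.* Any open set between the compact set `⋃ A_i (closure M)` and `M` is
again a multicone. Among the finite covers of this compact set by connected open sets with closure
in `M`, one with the least number of members has members with disjoint closures, and these are the
components of their union (`exists_finComp`).
-/

open Matrix

noncomputable section

/-- `SL(2,ℝ)`. -/
abbrev SL2 := Matrix.SpecialLinearGroup (Fin 2) ℝ

/-- Operator norm of a `2 × 2` real matrix, induced by the Euclidean norm on `ℝ²`. -/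
noncomputable def opNorm (A : Matrix (Fin 2) (Fin 2) ℝ) : ℝ :=
  ‖Matrix.toEuclideanCLM (𝕜 := ℝ) A‖

/-- Trace of an element of `SL(2,ℝ)`. -/
def trace2 (A : SL2) : ℝ := Matrix.trace (A : Matrix (Fin 2) (Fin 2) ℝ)

/-- Topology on `SL(2,ℝ)` induced from the space of `2 × 2` real matrices. -/
instance : TopologicalSpace SL2 := instTopologicalSpaceSubtype

/-- The real projective line: quotient of `ℝ² ∖ {0}` by nonzero scalar multiplication. -/
abbrev P1 := Projectivization ℝ (Fin 2 → ℝ)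

/-- The quotient topology on the real projective line. -/
instance : TopologicalSpace P1 := instTopologicalSpaceQuotient

/-- The projective action of `SL(2,ℝ)` on the real projective line. -/
def projAct (A : SL2) : P1 → P1 :=
  Projectivization.map (Matrix.SpecialLinearGroup.toLin' A).toLinearMap
    (Matrix.SpecialLinearGroup.toLin' A).injective

/-- For a word `w = [i₁, …, iₙ]`, the product `A_{iₙ} ⋯ A_{i₁}`. -/
def wordProd {N : ℕ} (A : Fin N → SL2) (w : List (Fin N)) : SL2 :=
  (w.reverse.map A).prod

/-- Uniform hyperbolicity with respect to the full shift on `N` symbols: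
every product of `n` matrices has operator norm at least `C·λⁿ`. -/
def UnifHyp {N : ℕ} (A : Fin N → SL2) : Prop :=
  ∃ C > (0:ℝ), ∃ lam > (1:ℝ), ∀ w : List (Fin N), w ≠ [] →
    opNorm (wordProd A w : Matrix (Fin 2) (Fin 2) ℝ) ≥ C * lam ^ w.length

/-- Transitivity of the subshift of finite type given by the transition relation `T`:
any symbol can be joined to any other by an admissible word. -/
def TransitiveSubshift {N : ℕ} (T : Fin N → Fin N → Prop) : Prop :=
  ∀ α β : Fin N, ∃ w : List (Fin N), w ≠ [] ∧ w.Chain' T ∧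
    w.head? = some α ∧ w.getLast? = some β

/-- Uniform hyperbolicity with respect to the subshift determined by the
transition relation `T`. -/
def UnifHypSub {N : ℕ} (T : Fin N → Fin N → Prop) (A : Fin N → SL2) : Prop :=
  ∃ C > (0:ℝ), ∃ lam > (1:ℝ), ∀ w : List (Fin N), w ≠ [] → w.Chain' T →
    opNorm (wordProd A w : Matrix (Fin 2) (Fin 2) ℝ) ≥ C * lam ^ w.length

/-- For a word `w` in two letters (`true ↦ A`, `false ↦ B`), the corresponding
product of the matrices `A`, `B` (letters applied right-to-left). -/
def pairProd (A B : SL2) (w : List Bool) : SL2 :=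
  (w.reverse.map fun b => if b then A else B).prod

/-- Uniform hyperbolicity of a pair `(A,B)` with respect to the full shift on two symbols. -/
def UnifHypPair (A B : SL2) : Prop :=
  ∃ C > (0:ℝ), ∃ lam > (1:ℝ), ∀ w : List Bool, w ≠ [] →
    opNorm (pairProd A B w : Matrix (Fin 2) (Fin 2) ℝ) ≥ C * lam ^ w.length

/-- The hyperbolicity locus for the full shift on two symbols. -/
def UHpairs : Set (SL2 × SL2) := {p | UnifHypPair p.1 p.2}

/-- The set of pairs having an elliptic product. -/
def Epairs : Set (SL2 × SL2) :=
  {p | ∃ w : List Bool, w ≠ [] ∧ |trace2 (pairProd p.1 p.2 w)| < 2}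

/-- An open interval in the projective line: a nonempty open connected subset
whose complement contains more than one point. -/
def IsOpenInterval (I : Set P1) : Prop :=
  IsOpen I ∧ IsConnected I ∧ Iᶜ.Nontrivial

/-- `H₀`: pairs possessing a common strictly invariant open interval. -/
def H0 : Set (SL2 × SL2) :=
  {p | ∃ I : Set P1, IsOpenInterval I ∧
        projAct p.1 '' closure I ⊆ I ∧ projAct p.2 '' closure I ⊆ I}

/-- `H_id`: pairs with `|tr A| > 2`, `|tr B| > 2`, `|tr AB| > 2`, `tr A · tr B · tr AB < 0`. -/
def Hid : Set (SL2 × SL2) :=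
  {p | 2 < |trace2 p.1| ∧ 2 < |trace2 p.2| ∧ 2 < |trace2 (p.1 * p.2)| ∧
       trace2 p.1 * trace2 p.2 * trace2 (p.1 * p.2) < 0}

/-- `F₊(A,B) = (A, AB)`. -/
def Fplus (p : SL2 × SL2) : SL2 × SL2 := (p.1, p.1 * p.2)

/-- `F₋(A,B) = (BA, B)`. -/
def Fminus (p : SL2 × SL2) : SL2 × SL2 := (p.2 * p.1, p.2)

/-- `applySeq [ε₁, …, ε_k] = F_{ε_k} ∘ ⋯ ∘ F_{ε₁}`, where `true` stands for `+`
and `false` for `−`. -/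
def applySeq (s : List Bool) (p : SL2 × SL2) : SL2 × SL2 :=
  s.foldl (fun q e => if e then Fplus q else Fminus q) p

/-- A pair `(A,B)` is free if `|tr A| ≥ 2`, `|tr B| ≥ 2`, `|tr AB| ≥ 2` and
`tr A · tr B · tr AB < 0`. -/
def FreePair (p : SL2 × SL2) : Prop :=
  2 ≤ |trace2 p.1| ∧ 2 ≤ |trace2 p.2| ∧ 2 ≤ |trace2 (p.1 * p.2)| ∧
    trace2 p.1 * trace2 p.2 * trace2 (p.1 * p.2) < 0

/-- A pair is straight if it lies in the closure of `H₀`. -/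
def Straight (p : SL2 × SL2) : Prop := p ∈ closure H0

/-- A pair `(A,B)` is twisted if `|tr A| ≥ 2`, `|tr B| ≥ 2` and it is not straight. -/
def Twisted (p : SL2 × SL2) : Prop :=
  2 ≤ |trace2 p.1| ∧ 2 ≤ |trace2 p.2| ∧ ¬ Straight p

/-- A pair is almost hyperbolic if every image of it under the monoid generated by
`F₊`, `F₋` consists of two non-elliptic matrices. -/
def AlmostHyperbolic (p : SL2 × SL2) : Prop :=
  ∀ s : List Bool, 2 ≤ |trace2 (applySeq s p).1| ∧ 2 ≤ |trace2 (applySeq s p).2|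

/-- Group-hyperbolicity of a pair: exponential growth over all reduced words
in the free group on two generators (`true ↦ A`, `false ↦ B`). -/
def GroupHyp (A B : SL2) : Prop :=
  ∃ C > (0:ℝ), ∃ τ > (0:ℝ), ∀ g : FreeGroup Bool, g ≠ 1 →
    opNorm ((FreeGroup.lift (fun b => if b then A else B) g : SL2) :
        Matrix (Fin 2) (Fin 2) ℝ) ≥
      C * Real.exp (τ * (FreeGroup.toWord g).length)

/-- `M` has finitely many connected components, and distinct components have
disjoint closures. -/
def FinCompDisjClosures (M : Set P1) : Prop :=
  {C : Set P1 | ∃ x ∈ M, C = connectedComponentIn M x}.Finite ∧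
    ∀ x ∈ M, ∀ y ∈ M, connectedComponentIn M x ≠ connectedComponentIn M y →
      closure (connectedComponentIn M x) ∩ closure (connectedComponentIn M y) = ∅

end

/-! ### Linear algebra in the plane -/

/-- The area form on `ℝ²`. It is preserved by `SL(2,ℝ)`, and it vanishes on a pair of nonzero
vectors exactly when they span the same line. -/
def wedge (v u : Fin 2 → ℝ) : ℝ := v 0 * u 1 - v 1 * u 0

/-- The largest absolute value of an entry of a matrix; it is comparable to `opNorm`. -/
noncomputable def maxEntry (B : Matrix (Fin 2) (Fin 2) ℝ) : ℝ :=
  max (max |B 0 0| |B 0 1|) (max |B 1 0| |B 1 1|)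

theorem norm_fin_two (v : Fin 2 → ℝ) : ‖v‖ = max |v 0| |v 1| := by
  refine le_antisymm ?_ ?_
  · refine (pi_norm_le_iff_of_nonneg (by positivity)).2 fun i => ?_
    fin_cases i
    · exact le_max_left _ _
    · exact le_max_right _ _
  · exact max_le (norm_le_pi_norm v 0) (norm_le_pi_norm v 1)

theorem abs_zero_le_norm (v : Fin 2 → ℝ) : |v 0| ≤ ‖v‖ := norm_le_pi_norm v 0

theorem abs_one_le_norm (v : Fin 2 → ℝ) : |v 1| ≤ ‖v‖ := norm_le_pi_norm v 1

theorem norm_le_of_abs_le {v : Fin 2 → ℝ} {r : ℝ} (h0 : |v 0| ≤ r) (h1 : |v 1| ≤ r) :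
    ‖v‖ ≤ r := by
  rw [norm_fin_two]; exact max_le h0 h1

theorem abs_entry_le (B : Matrix (Fin 2) (Fin 2) ℝ) (i j : Fin 2) : |B i j| ≤ maxEntry B := by
  unfold maxEntry
  fin_cases i <;> fin_cases j <;> simp

theorem maxEntry_le {B : Matrix (Fin 2) (Fin 2) ℝ} {r : ℝ} (h : ∀ i j, |B i j| ≤ r) :
    maxEntry B ≤ r :=
  max_le (max_le (h 0 0) (h 0 1)) (max_le (h 1 0) (h 1 1))

theorem maxEntry_nonneg (B : Matrix (Fin 2) (Fin 2) ℝ) : 0 ≤ maxEntry B :=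
  (abs_nonneg _).trans (abs_entry_le B 0 0)

theorem maxEntry_pos (B : SL2) : 0 < maxEntry B.1 := by
  refine lt_of_le_of_ne (maxEntry_nonneg _) fun h => ?_
  have h0 : ∀ i j, B.1 i j = 0 := fun i j =>
    abs_eq_zero.1 (le_antisymm (h ▸ abs_entry_le B.1 i j) (abs_nonneg _))
  have := B.2
  rw [Matrix.det_fin_two] at this
  simp [h0] at this

theorem maxEntry_one : maxEntry (1 : SL2).1 = 1 := by
  simp [maxEntry]

theorem mulVec_zero_eq (B : Matrix (Fin 2) (Fin 2) ℝ) (v : Fin 2 → ℝ) :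
    (B *ᵥ v) 0 = B 0 0 * v 0 + B 0 1 * v 1 := by
  simp [Matrix.mulVec, dotProduct, Fin.sum_univ_two]

theorem mulVec_one_eq (B : Matrix (Fin 2) (Fin 2) ℝ) (v : Fin 2 → ℝ) :
    (B *ᵥ v) 1 = B 1 0 * v 0 + B 1 1 * v 1 := by
  simp [Matrix.mulVec, dotProduct, Fin.sum_univ_two]

theorem abs_mul_add_mul_le {a b c d r s : ℝ} (ha : |a| ≤ r) (hb : |b| ≤ r) (hc : |c| ≤ s)
    (hd : |d| ≤ s) : |a * c + b * d| ≤ 2 * r * s := by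
  have hr := (abs_nonneg _).trans ha
  calc |a * c + b * d| ≤ |a| * |c| + |b| * |d| := by
        rw [← abs_mul, ← abs_mul]; exact abs_add_le _ _
    _ ≤ r * s + r * s := by gcongr
    _ = 2 * r * s := by ring

theorem norm_mulVec_le (B : Matrix (Fin 2) (Fin 2) ℝ) (v : Fin 2 → ℝ) :
    ‖B *ᵥ v‖ ≤ 2 * maxEntry B * ‖v‖ := by
  refine norm_le_of_abs_le ?_ ?_
  · rw [mulVec_zero_eq]
    exact abs_mul_add_mul_le (abs_entry_le ..) (abs_entry_le ..) (abs_zero_le_norm v)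
      (abs_one_le_norm v)
  · rw [mulVec_one_eq]
    exact abs_mul_add_mul_le (abs_entry_le ..) (abs_entry_le ..) (abs_zero_le_norm v)
      (abs_one_le_norm v)

theorem maxEntry_mul_le (B C : Matrix (Fin 2) (Fin 2) ℝ) :
    maxEntry (B * C) ≤ 2 * maxEntry B * maxEntry C := by
  refine maxEntry_le fun i j => ?_
  rw [Matrix.mul_apply, Fin.sum_univ_two]
  exact abs_mul_add_mul_le (abs_entry_le ..) (abs_entry_le ..) (abs_entry_le ..) (abs_entry_le ..)

theorem maxEntry_inv (B : SL2) : maxEntry (B⁻¹).1 = maxEntry B.1 := by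
  rw [Matrix.SpecialLinearGroup.SL2_inv_expl]
  simp only [maxEntry, Matrix.cons_val', Matrix.cons_val_zero,
    Matrix.cons_val_one, Matrix.cons_val_fin_one, abs_neg]
  generalize |B.1 0 0| = a, |B.1 0 1| = b, |B.1 1 0| = c, |B.1 1 1| = d
  rw [max_comm d b, max_comm c a, max_max_max_comm, max_comm b a, max_comm d c]

theorem inv_mulVec_mulVec (B : SL2) (v : Fin 2 → ℝ) : (B⁻¹).1 *ᵥ (B.1 *ᵥ v) = v := by
  rw [Matrix.mulVec_mulVec, ← Matrix.SpecialLinearGroup.coe_mul, inv_mul_cancel,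
    Matrix.SpecialLinearGroup.coe_one, Matrix.one_mulVec]

theorem mulVec_inv_mulVec (B : SL2) (v : Fin 2 → ℝ) : B.1 *ᵥ ((B⁻¹).1 *ᵥ v) = v := by
  rw [Matrix.mulVec_mulVec, ← Matrix.SpecialLinearGroup.coe_mul, mul_inv_cancel,
    Matrix.SpecialLinearGroup.coe_one, Matrix.one_mulVec]

theorem mulVec_ne_zero (B : SL2) {v : Fin 2 → ℝ} (hv : v ≠ 0) : B.1 *ᵥ v ≠ 0 := fun h =>
  hv (by rw [← inv_mulVec_mulVec B v, h, Matrix.mulVec_zero])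

theorem norm_le_mulVec (B : SL2) (v : Fin 2 → ℝ) : ‖v‖ ≤ 2 * maxEntry B.1 * ‖B.1 *ᵥ v‖ := by
  conv_lhs => rw [← inv_mulVec_mulVec B v]
  rw [← maxEntry_inv]
  exact norm_mulVec_le _ _

theorem wedge_mulVec (B : SL2) (v u : Fin 2 → ℝ) : wedge (B.1 *ᵥ v) (B.1 *ᵥ u) = wedge v u := by
  have h := B.2
  rw [Matrix.det_fin_two] at h
  simp only [wedge, mulVec_zero_eq, mulVec_one_eq]
  linear_combination (v 0 * u 1 - v 1 * u 0) * h

theorem abs_wedge_le (v u : Fin 2 → ℝ) : |wedge v u| ≤ 2 * ‖v‖ * ‖u‖ := by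
  have : wedge v u = v 0 * u 1 + v 1 * (-u 0) := by unfold wedge; ring
  rw [this]
  exact abs_mul_add_mul_le (abs_zero_le_norm v) (abs_one_le_norm v) (abs_one_le_norm u)
    (by rw [abs_neg]; exact abs_zero_le_norm u)

theorem wedge_swap (v u : Fin 2 → ℝ) : wedge v u = -wedge u v := by unfold wedge; ring

theorem abs_wedge_comm (v u : Fin 2 → ℝ) : |wedge v u| = |wedge u v| := by
  rw [wedge_swap, abs_neg]

theorem wedge_self (v : Fin 2 → ℝ) : wedge v v = 0 := by unfold wedge; ring

theorem wedge_add_left (v w u : Fin 2 → ℝ) : wedge (v + w) u = wedge v u + wedge w u := by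
  simp only [wedge, Pi.add_apply]; ring

theorem wedge_sub_left (v w u : Fin 2 → ℝ) : wedge (v - w) u = wedge v u - wedge w u := by
  simp only [wedge, Pi.sub_apply]; ring

theorem wedge_smul_left (c : ℝ) (v u : Fin 2 → ℝ) : wedge (c • v) u = c * wedge v u := by
  simp only [wedge, Pi.smul_apply, smul_eq_mul]; ring

theorem wedge_sub_right (v w u : Fin 2 → ℝ) : wedge u (v - w) = wedge u v - wedge u w := by
  simp only [wedge, Pi.sub_apply]; ring

theorem wedge_smul_right (c : ℝ) (v u : Fin 2 → ℝ) : wedge u (c • v) = c * wedge u v := by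
  simp only [wedge, Pi.smul_apply, smul_eq_mul]; ring

/-- A unit vector that `B` contracts as strongly as possible, up to constants. -/
theorem exists_contracted (B : SL2) : ∃ s : Fin 2 → ℝ, ‖s‖ = 1 ∧ ‖B.1 *ᵥ s‖ ≤ 1 / maxEntry B.1 := by
  -- The column of `B⁻¹` containing its largest entry is sent by `B` to a basis vector.
  have key : ∀ y : Fin 2 → ℝ, ‖y‖ = maxEntry B.1 → ‖B.1 *ᵥ y‖ ≤ 1 →
      ∃ s : Fin 2 → ℝ, ‖s‖ = 1 ∧ ‖B.1 *ᵥ s‖ ≤ 1 / maxEntry B.1 := by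
    intro y hy hBy
    have hpos := maxEntry_pos B
    refine ⟨(maxEntry B.1)⁻¹ • y, ?_, ?_⟩
    · rw [norm_smul, hy, norm_inv, Real.norm_of_nonneg hpos.le, inv_mul_cancel₀ hpos.ne']
    · rw [Matrix.mulVec_smul, norm_smul, norm_inv, Real.norm_of_nonneg hpos.le, one_div]
      exact mul_le_of_le_one_right (by positivity) hBy
  have h := B.2
  rw [Matrix.det_fin_two] at h
  rcases max_choice (max |B.1 0 0| |B.1 0 1|) (max |B.1 1 0| |B.1 1 1|) with hm | hm
  · refine key ![-B.1 0 1, B.1 0 0] ?_ (norm_le_of_abs_le ?_ ?_)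
    · rw [norm_fin_two, maxEntry, hm]
      simp [max_comm]
    · have : B.1 0 0 * -B.1 0 1 + B.1 0 1 * B.1 0 0 = 0 := by ring
      simp only [mulVec_zero_eq, Matrix.cons_val_zero, Matrix.cons_val_one, this, abs_zero,
        zero_le_one]
    · have : B.1 1 0 * -B.1 0 1 + B.1 1 1 * B.1 0 0 = 1 := by linear_combination h
      simp only [mulVec_one_eq, Matrix.cons_val_zero, Matrix.cons_val_one, this, abs_one, le_refl]
  · refine key ![B.1 1 1, -B.1 1 0] ?_ (norm_le_of_abs_le ?_ ?_)
    · rw [norm_fin_two, maxEntry, hm]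
      simp [max_comm]
    · have : B.1 0 0 * B.1 1 1 + B.1 0 1 * -B.1 1 0 = 1 := by linear_combination h
      simp only [mulVec_zero_eq, Matrix.cons_val_zero, Matrix.cons_val_one, this, abs_one, le_refl]
    · have : B.1 1 0 * B.1 1 1 + B.1 1 1 * -B.1 1 0 = 0 := by ring
      simp only [mulVec_one_eq, Matrix.cons_val_zero, Matrix.cons_val_one, this, abs_zero,
        zero_le_one]

/-- Expansion of `v` along a unit vector `s`, with remainder controlled by the area form. -/
theorem exists_decomp (v s : Fin 2 → ℝ) (hs : ‖s‖ = 1) :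
    ∃ c : ℝ, |c| ≤ ‖v‖ ∧ ‖v - c • s‖ ≤ |wedge v s| := by
  have hs0 := abs_zero_le_norm s
  have hs1 := abs_one_le_norm s
  rw [hs] at hs0 hs1
  rw [norm_fin_two] at hs
  rcases max_choice |s 0| |s 1| with h | h
  · have h1 : |s 0| = 1 := h ▸ hs
    have hsq : s 0 * s 0 = 1 := by rw [← abs_mul_abs_self, h1, one_mul]
    refine ⟨v 0 * s 0, ?_, norm_le_of_abs_le ?_ ?_⟩
    · rw [abs_mul, h1, mul_one]; exact abs_zero_le_norm v
    · have : (v - (v 0 * s 0) • s) 0 = 0 := by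
        simp only [Pi.sub_apply, Pi.smul_apply, smul_eq_mul]; linear_combination (-v 0) * hsq
      rw [this, abs_zero]; exact abs_nonneg _
    · have : (v - (v 0 * s 0) • s) 1 = - s 0 * wedge v s := by
        simp only [Pi.sub_apply, Pi.smul_apply, smul_eq_mul, wedge]
        linear_combination (-v 1) * hsq
      rw [this, abs_mul, abs_neg, h1, one_mul]
  · have h1 : |s 1| = 1 := h ▸ hs
    have hsq : s 1 * s 1 = 1 := by rw [← abs_mul_abs_self, h1, one_mul]
    refine ⟨v 1 * s 1, ?_, norm_le_of_abs_le ?_ ?_⟩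
    · rw [abs_mul, h1, mul_one]; exact abs_one_le_norm v
    · have : (v - (v 1 * s 1) • s) 0 = s 1 * wedge v s := by
        simp only [Pi.sub_apply, Pi.smul_apply, smul_eq_mul, wedge]
        linear_combination (-v 0) * hsq
      rw [this, abs_mul, h1, one_mul]
    · have : (v - (v 1 * s 1) • s) 1 = 0 := by
        simp only [Pi.sub_apply, Pi.smul_apply, smul_eq_mul]; linear_combination (-v 1) * hsq
      rw [this, abs_zero]; exact abs_nonneg _

theorem maxEntry_le_opNorm (B : Matrix (Fin 2) (Fin 2) ℝ) : maxEntry B ≤ opNorm B := by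
  refine maxEntry_le fun i j => ?_
  have h1 := (Matrix.toEuclideanCLM (𝕜 := ℝ) B).le_opNorm (EuclideanSpace.single j 1)
  have h2 := PiLp.norm_apply_le (Matrix.toEuclideanCLM (𝕜 := ℝ) B (EuclideanSpace.single j 1)) i
  have h3 : (Matrix.toEuclideanCLM (𝕜 := ℝ) B (EuclideanSpace.single j 1)) i = B i j := by
    simp [Matrix.ofLp_toEuclideanCLM]
  rw [h3] at h2
  simp only [PiLp.norm_single, norm_one, mul_one] at h1
  exact h2.trans h1

theorem opNorm_le (B : Matrix (Fin 2) (Fin 2) ℝ) : opNorm B ≤ 4 * maxEntry B := by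
  refine ContinuousLinearMap.opNorm_le_bound _ (by have := maxEntry_nonneg B; positivity) fun x => ?_
  have h0 := PiLp.norm_apply_le x 0
  have h1 := PiLp.norm_apply_le x 1
  have hb := norm_mulVec_le B x.ofLp
  have hx : ‖x.ofLp‖ ≤ ‖x‖ := norm_le_of_abs_le h0 h1
  have h2 : ‖Matrix.toEuclideanCLM (𝕜 := ℝ) B x‖ ≤ 2 * ‖B *ᵥ x.ofLp‖ := by
    rw [EuclideanSpace.norm_eq, Fin.sum_univ_two, Matrix.ofLp_toEuclideanCLM]
    refine Real.sqrt_le_iff.2 ⟨by positivity, ?_⟩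
    have a0 : ‖(B *ᵥ x.ofLp) 0‖ ^ 2 ≤ ‖B *ᵥ x.ofLp‖ ^ 2 := by
      gcongr; exact abs_zero_le_norm _
    have a1 : ‖(B *ᵥ x.ofLp) 1‖ ^ 2 ≤ ‖B *ᵥ x.ofLp‖ ^ 2 := by
      gcongr; exact abs_one_le_norm _
    nlinarith [sq_nonneg ‖B *ᵥ x.ofLp‖]
  have := maxEntry_nonneg B
  calc _ ≤ _ := h2
    _ ≤ 2 * (2 * maxEntry B * ‖x.ofLp‖) := by gcongr
    _ ≤ 2 * (2 * maxEntry B * ‖x‖) := by gcongr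
    _ = _ := by ring

/-! ### Topology of the projective line -/

theorem isQuotientMap_mk :
    Topology.IsQuotientMap (Projectivization.mk' ℝ : {v : Fin 2 → ℝ // v ≠ 0} → P1) :=
  isQuotientMap_quotient_mk'

theorem exists_mk_eq (x : P1) : ∃ (v : Fin 2 → ℝ) (hv : v ≠ 0), Projectivization.mk ℝ v hv = x :=
  ⟨_, Projectivization.rep_nonzero x, Projectivization.mk_rep x⟩

theorem wedge_eq_zero_iff {v u : Fin 2 → ℝ} (hv : v ≠ 0) (hu : u ≠ 0) :
    wedge v u = 0 ↔ Projectivization.mk ℝ v hv = Projectivization.mk ℝ u hu := by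
  rw [Projectivization.mk_eq_mk_iff']
  constructor
  · intro h
    by_cases h0 : u 0 = 0
    · have h1 : u 1 ≠ 0 := fun h1 => hu (by ext i; fin_cases i <;> simp [h0, h1])
      refine ⟨v 1 / u 1, ?_⟩
      unfold wedge at h
      ext i; fin_cases i
      · have : v 0 * u 1 = 0 := by rw [h0] at h; linarith
        simp [h0, (mul_eq_zero.1 this).resolve_right h1]
      · simp [h1]
    · refine ⟨v 0 / u 0, ?_⟩
      unfold wedge at h
      ext i; fin_cases i
      · simp [h0]
      · simp only [Pi.smul_apply, smul_eq_mul, Fin.mk_one]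
        field_simp
        linarith
  · rintro ⟨a, rfl⟩
    rw [wedge_smul_left, wedge_self, mul_zero]

theorem mk_smul_eq {v : Fin 2 → ℝ} (hv : v ≠ 0) {c : ℝ} (hcv : c • v ≠ 0) :
    Projectivization.mk ℝ (c • v) hcv = Projectivization.mk ℝ v hv :=
  (Projectivization.mk_eq_mk_iff' ℝ _ _ _ _).2 ⟨c, rfl⟩

/-- The quantity `|v ∧ u| / ‖v‖`, as a function of the line spanned by `v`. It vanishes only at the
line of `u`. -/
noncomputable def relWedge (u : Fin 2 → ℝ) : P1 → ℝ :=
  Projectivization.lift (fun v : {v : Fin 2 → ℝ // v ≠ 0} => |wedge v.1 u| / ‖v.1‖) (by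
    rintro ⟨a, ha⟩ ⟨b, hb⟩ t rfl
    have ht : t ≠ 0 := fun h => ha (by simp [h])
    simp only [wedge_smul_left, abs_mul, norm_smul, Real.norm_eq_abs]
    exact mul_div_mul_left _ _ (abs_ne_zero.2 ht))

theorem continuous_wedge : Continuous fun p : (Fin 2 → ℝ) × (Fin 2 → ℝ) => wedge p.1 p.2 := by
  unfold wedge; fun_prop

theorem continuous_relWedge (u : Fin 2 → ℝ) : Continuous (relWedge u) := by
  refine isQuotientMap_mk.continuous_iff.2 ?_
  change Continuous fun v : {v : Fin 2 → ℝ // v ≠ 0} => |wedge v.1 u| / ‖v.1‖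
  refine Continuous.div ?_ (by fun_prop) fun v => norm_ne_zero_iff.2 v.2
  exact (continuous_wedge.comp (continuous_subtype_val.prodMk continuous_const)).abs

instance : T2Space P1 := by
  refine T2Space.mk fun x y hxy => ?_
  obtain ⟨u, hu, rfl⟩ := exists_mk_eq y
  refine separated_by_continuous (continuous_relWedge u) (fun h => hxy ?_)
  obtain ⟨v, hv, rfl⟩ := exists_mk_eq x
  change |wedge v u| / ‖v‖ = |wedge u u| / ‖u‖ at h
  rw [wedge_self, abs_zero, zero_div, div_eq_zero_iff, abs_eq_zero] at h
  exact (wedge_eq_zero_iff hv hu).1 (h.resolve_right (norm_ne_zero_iff.2 hv))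

theorem normalize_ne_zero {v : Fin 2 → ℝ} (hv : v ≠ 0) : ‖v‖⁻¹ • v ≠ 0 :=
  smul_ne_zero (inv_ne_zero (norm_ne_zero_iff.2 hv)) hv

theorem norm_normalize {v : Fin 2 → ℝ} (hv : v ≠ 0) : ‖‖v‖⁻¹ • v‖ = 1 := by
  rw [norm_smul, norm_inv, norm_norm, inv_mul_cancel₀ (norm_ne_zero_iff.2 hv)]

/-- The line spanned by a vector of the unit sphere. -/
noncomputable def sphereToP1 (v : Metric.sphere (0 : Fin 2 → ℝ) 1) : P1 :=
  Projectivization.mk ℝ v.1 (ne_zero_of_mem_unit_sphere v)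

theorem continuous_sphereToP1 : Continuous sphereToP1 :=
  isQuotientMap_mk.continuous.comp (continuous_subtype_val.subtype_mk _)

theorem surjective_sphereToP1 : Function.Surjective sphereToP1 := fun x => by
  obtain ⟨v, hv, rfl⟩ := exists_mk_eq x
  exact ⟨⟨‖v‖⁻¹ • v, by simpa using norm_normalize hv⟩, mk_smul_eq hv _⟩

instance : CompactSpace P1 := surjective_sphereToP1.compactSpace continuous_sphereToP1

instance : LocallyConnectedSpace P1 := by
  have : LocallyConnectedSpace (Fin 2 → ℝ) := inferInstance
  have : LocallyConnectedSpace {v : Fin 2 → ℝ // v ≠ 0} :=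
    IsOpen.locallyConnectedSpace isOpen_ne
  exact isQuotientMap_mk.isCoinducing.locallyConnectedSpace

theorem continuous_projAct (B : SL2) : Continuous (projAct B) := by
  refine isQuotientMap_mk.continuous_iff.2 ?_
  refine isQuotientMap_mk.continuous.comp (Continuous.subtype_mk ?_ _)
  change Continuous fun v : {v : Fin 2 → ℝ // v ≠ 0} => B.1 *ᵥ v.1
  fun_prop

theorem projAct_mk (B : SL2) {v : Fin 2 → ℝ} (hv : v ≠ 0) :
    projAct B (Projectivization.mk ℝ v hv) =
      Projectivization.mk ℝ (B.1 *ᵥ v) (mulVec_ne_zero B hv) := rfl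

/-- Points of a closed set and of the complement of an open set containing it are uniformly
transverse. -/
theorem exists_transversality {L M : Set P1} (hL : IsClosed L) (hM : IsOpen M) (hLM : L ⊆ M) :
    ∃ c > 0, ∀ (y p : Fin 2 → ℝ) (hy : y ≠ 0) (hp : p ≠ 0), Projectivization.mk ℝ y hy ∈ L →
      Projectivization.mk ℝ p hp ∉ M → c * ‖y‖ * ‖p‖ ≤ |wedge y p| := by
  let S := Metric.sphere (0 : Fin 2 → ℝ) 1
  let X : Set (S × S) := {z | sphereToP1 z.1 ∈ L ∧ sphereToP1 z.2 ∈ Mᶜ}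
  have hX : IsClosed X :=
    (hL.preimage (continuous_sphereToP1.comp continuous_fst)).inter
      (hM.isClosed_compl.preimage (continuous_sphereToP1.comp continuous_snd))
  have hf : Continuous fun z : S × S => |wedge z.1.1 z.2.1| :=
    (continuous_wedge.comp (by fun_prop : Continuous fun z : S × S => (z.1.1, z.2.1))).abs
  obtain ⟨c, hc, hcX⟩ : ∃ c > 0, ∀ z ∈ X, c ≤ |wedge z.1.1 z.2.1| := by
    refine hX.isCompact.exists_forall_le' hf.continuousOn fun z hz => abs_pos.2 fun h => ?_
    have := (wedge_eq_zero_iff (ne_zero_of_mem_unit_sphere z.1)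
      (ne_zero_of_mem_unit_sphere z.2)).1 h
    exact hz.2 (hLM (by have h1 := hz.1; unfold sphereToP1 at h1 ⊢; rwa [this] at h1))
  refine ⟨c, hc, fun y p hy hp hyL hpM => ?_⟩
  have h := hcX (⟨‖y‖⁻¹ • y, mem_sphere_zero_iff_norm.2 (norm_normalize hy)⟩,
    ⟨‖p‖⁻¹ • p, mem_sphere_zero_iff_norm.2 (norm_normalize hp)⟩)
    ⟨by unfold sphereToP1; rwa [mk_smul_eq hy], by unfold sphereToP1; rwa [mk_smul_eq hp]⟩
  simp only [wedge_smul_left, wedge_smul_right, abs_mul, abs_inv, abs_norm] at h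
  have hy' := norm_pos_iff.2 hy
  have hp' := norm_pos_iff.2 hp
  calc c * ‖y‖ * ‖p‖ ≤ (‖p‖⁻¹ * (‖y‖⁻¹ * |wedge y p|)) * ‖y‖ * ‖p‖ := by gcongr
    _ = |wedge y p| := by field_simp

/-! ### Words and products -/

theorem wordProd_nil {N : ℕ} (A : Fin N → SL2) : wordProd A [] = 1 := rfl

theorem wordProd_append {N : ℕ} (A : Fin N → SL2) (w w' : List (Fin N)) :
    wordProd A (w ++ w') = wordProd A w' * wordProd A w := by
  simp [wordProd]

theorem wordProd_cons {N : ℕ} (A : Fin N → SL2) (i : Fin N) (w : List (Fin N)) :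
    wordProd A (i :: w) = wordProd A w * A i := by
  simp [wordProd]

/-! ### A multicone forces uniform hyperbolicity -/

/-- For `x` in the cone over `M`, the bound `r` on the density of the Hilbert metric of `M` at
`x`: seen from `x`, the complement of `M` has diameter at most `r`. For an interval `M` with
endpoints `p` and `q` the density is `|p ∧ q| / (|x ∧ p| |x ∧ q|)`. -/
def HilbertBound (M : Set P1) (x : Fin 2 → ℝ) (r : ℝ) : Prop :=
  ∀ (p q : Fin 2 → ℝ) (hp : p ≠ 0) (hq : q ≠ 0), Projectivization.mk ℝ p hp ∉ M →
    Projectivization.mk ℝ q hq ∉ M → |wedge p q| ≤ r * |wedge x p| * |wedge x q|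

/-- It suffices to test unit vectors `p`, `q` lying on the same side of `x`. -/
theorem HilbertBound.of_unit {M : Set P1} {x : Fin 2 → ℝ} {r : ℝ}
    (h : ∀ (p q : Fin 2 → ℝ) (hp : p ≠ 0) (hq : q ≠ 0), ‖p‖ = 1 → ‖q‖ = 1 →
      0 ≤ wedge x p → 0 ≤ wedge x q → Projectivization.mk ℝ p hp ∉ M →
      Projectivization.mk ℝ q hq ∉ M → |wedge p q| ≤ r * |wedge x p| * |wedge x q|) :
    HilbertBound M x r := by
  have key : ∀ p : Fin 2 → ℝ, p ≠ 0 → ∃ c : ℝ, c ≠ 0 ∧ ‖c • p‖ = 1 ∧ 0 ≤ wedge x (c • p) := by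
    intro p hp
    have hp' := inv_ne_zero (norm_ne_zero_iff.2 hp)
    rcases le_total 0 (wedge x (‖p‖⁻¹ • p)) with h0 | h0
    · exact ⟨_, hp', norm_normalize hp, h0⟩
    · refine ⟨-‖p‖⁻¹, neg_ne_zero.2 hp', ?_, ?_⟩
      · rw [neg_smul, norm_neg, norm_normalize hp]
      · rw [wedge_smul_right] at h0 ⊢; linarith
  intro p q hp hq hpM hqM
  obtain ⟨a, ha, ha1, hap⟩ := key p hp
  obtain ⟨b, hb, hb1, hbq⟩ := key q hq
  have hap0 : a • p ≠ 0 := smul_ne_zero ha hp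
  have hbq0 : b • q ≠ 0 := smul_ne_zero hb hq
  have := h _ _ hap0 hbq0 ha1 hb1 hap hbq (by rwa [mk_smul_eq hp]) (by rwa [mk_smul_eq hq])
  simp only [wedge_smul_left, wedge_smul_right, abs_mul] at this
  have ha' := abs_pos.2 ha
  have hb' := abs_pos.2 hb
  refine le_of_mul_le_mul_left ?_ (mul_pos ha' hb')
  linarith

/-- If `B M ⊆ L ⊆ M`, where `L` is transverse to the complement of `M` with constant `c`, then `B`
contracts the Hilbert density by a definite factor. Put `y = B x`: replacing `p` by `p - ε q` stays
outside `B M` and leaves `p ∧ q` unchanged, while it decreases `y ∧ p` by a definite proportion. -/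
theorem HilbertBound.step {M L : Set P1} {B : SL2} {c : ℝ} (hc : 0 < c) (hLM : L ⊆ M)
    (hBL : projAct B '' M ⊆ L)
    (htr : ∀ (y p : Fin 2 → ℝ) (hy : y ≠ 0) (hp : p ≠ 0), Projectivization.mk ℝ y hy ∈ L →
      Projectivization.mk ℝ p hp ∉ M → c * ‖y‖ * ‖p‖ ≤ |wedge y p|)
    {x : Fin 2 → ℝ} (hx : x ≠ 0) (hxM : Projectivization.mk ℝ x hx ∈ M) {r : ℝ} (hr : 0 ≤ r)
    (h : HilbertBound M x r) {ε : ℝ} (hε : 0 < ε) (hε1 : ε < 1) (hε2 : 2 * ε < c * (1 - ε)) :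
    HilbertBound M (B.1 *ᵥ x) ((1 - ε * c / 2) * r) := by
  have hmem : ∀ (z : Fin 2 → ℝ) (hz : z ≠ 0), Projectivization.mk ℝ z hz ∈ M →
      Projectivization.mk ℝ (B.1 *ᵥ z) (mulVec_ne_zero B hz) ∈ L := fun z hz hzM =>
    hBL ⟨_, hzM, projAct_mk B hz⟩
  set y := B.1 *ᵥ x with hy
  have hy0 : y ≠ 0 := mulVec_ne_zero B hx
  have hyL := hmem x hx hxM
  have hypos := norm_pos_iff.2 hy0
  refine HilbertBound.of_unit fun p q hp hq hp1 hq1 hyp hyq hpM hqM => ?_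
  have h1 := htr y p hy0 hp hyL hpM
  have h2 := htr y q hy0 hq hyL hqM
  have h3 := abs_wedge_le y p
  have h4 := abs_wedge_le y q
  rw [abs_of_nonneg hyp] at h1 h3 ⊢
  rw [abs_of_nonneg hyq] at h2 h4 ⊢
  rw [hp1, mul_one] at h1 h3
  rw [hq1, mul_one] at h2 h4
  have hp'n : 1 - ε ≤ ‖p - ε • q‖ := by
    have := norm_sub_norm_le p (ε • q)
    rwa [norm_smul, hp1, hq1, mul_one, Real.norm_of_nonneg hε.le] at this
  have hp'0 : p - ε • q ≠ 0 := norm_pos_iff.1 (by linarith)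
  have hBp : (B⁻¹).1 *ᵥ (p - ε • q) ≠ 0 := mulVec_ne_zero _ hp'0
  have hBq : (B⁻¹).1 *ᵥ q ≠ 0 := mulVec_ne_zero _ hq
  have hp'M : Projectivization.mk ℝ _ hBp ∉ M := by
    intro hM
    have hL := hmem _ hBp hM
    simp only [mulVec_inv_mulVec] at hL
    have h5 := htr _ p hp'0 hp hL hpM
    rw [wedge_sub_left, wedge_self, wedge_smul_left, zero_sub, abs_neg, abs_mul,
      abs_of_pos hε, hp1, mul_one] at h5
    have h6 := abs_wedge_le q p
    rw [hp1, hq1] at h6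
    nlinarith
  have hq'M : Projectivization.mk ℝ _ hBq ∉ M := by
    intro hM
    have hL := hmem _ hBq hM
    simp only [mulVec_inv_mulVec] at hL
    exact hqM (hLM hL)
  have h7 := h _ _ hBp hBq hp'M hq'M
  rw [← wedge_mulVec B, ← wedge_mulVec B x, ← wedge_mulVec B x, mulVec_inv_mulVec,
    mulVec_inv_mulVec, ← hy, wedge_sub_left, wedge_smul_left, wedge_self, mul_zero, sub_zero,
    wedge_sub_right, wedge_smul_right, abs_of_nonneg hyq] at h7
  have h8 : |wedge y p - ε * wedge y q| ≤ (1 - ε * c / 2) * wedge y p := by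
    rw [abs_of_nonneg (by nlinarith)]
    nlinarith [mul_le_mul_of_nonneg_left h2 hε.le, mul_le_mul_of_nonneg_left h3 (mul_pos hε hc).le]
  calc _ ≤ _ := h7
    _ ≤ r * ((1 - ε * c / 2) * wedge y p) * wedge y q := by gcongr
    _ = _ := by ring

theorem exists_ne_notMem {M : Set P1} (h : closure M ≠ Set.univ) :
    ∃ (p q : Fin 2 → ℝ) (hp : p ≠ 0) (hq : q ≠ 0), wedge p q ≠ 0 ∧
      Projectivization.mk ℝ p hp ∉ M ∧ Projectivization.mk ℝ q hq ∉ M := by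
  obtain ⟨x, hx⟩ := (Set.ne_univ_iff_exists_notMem _).1 h
  obtain ⟨p, hp, rfl⟩ := exists_mk_eq x
  obtain ⟨e, he⟩ : ∃ e : Fin 2 → ℝ, wedge p e ≠ 0 := by
    refine ⟨![-p 1, p 0], fun h0 => hp ?_⟩
    simp only [wedge, Matrix.cons_val_zero, Matrix.cons_val_one] at h0
    ext i; fin_cases i <;> simp <;> nlinarith [sq_nonneg (p 0), sq_nonneg (p 1)]
  have hU : IsOpen {v : {v : Fin 2 → ℝ // v ≠ 0} | Projectivization.mk' ℝ v ∈ (closure M)ᶜ} :=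
    isClosed_closure.isOpen_compl.preimage isQuotientMap_mk.continuous
  obtain ⟨V, hV, hVU⟩ := isOpen_induced_iff.1 hU
  have hpV : p ∈ V := by
    have : (⟨p, hp⟩ : {v : Fin 2 → ℝ // v ≠ 0}) ∈ Subtype.val ⁻¹' V := by rw [hVU]; exact hx
    exact this
  have hcont : Continuous fun t : ℝ => p + t • e := by fun_prop
  have hnhds : ∀ᶠ t in nhds (0 : ℝ), p + t • e ∈ V :=
    hcont.continuousAt.eventually_mem (by simpa using hV.mem_nhds hpV)
  obtain ⟨t, ht, ht0⟩ := ((hnhds.filter_mono nhdsWithin_le_nhds).and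
    (self_mem_nhdsWithin : {(0 : ℝ)}ᶜ ∈ nhdsWithin 0 {0}ᶜ)).exists
  have hw : wedge p (p + t • e) = t * wedge p e := by
    rw [wedge_swap, wedge_add_left, wedge_smul_left, wedge_self, wedge_swap p e]; ring
  have hq : p + t • e ≠ 0 := by
    intro h0
    rw [h0] at hw
    simp only [wedge, Pi.zero_apply, mul_zero, sub_zero] at hw
    exact mul_ne_zero ht0 he hw.symm
  refine ⟨p, p + t • e, hp, hq, by rw [hw]; exact mul_ne_zero ht0 he,
    fun hM => hx (subset_closure hM), fun hM => ?_⟩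
  have : (⟨p + t • e, hq⟩ : {v : Fin 2 → ℝ // v ≠ 0}) ∈ Subtype.val ⁻¹' V := ht
  rw [hVU] at this
  exact this (subset_closure hM)

theorem isClosed_iUnion_image {N : ℕ} (A : Fin N → SL2) (M : Set P1) :
    IsClosed (⋃ i, projAct (A i) '' closure M) :=
  isClosed_iUnion_of_finite fun i =>
    (isClosed_closure.isCompact.image (continuous_projAct (A i))).isClosed

/-- Along a word the Hilbert density at the image of a fixed `x` decays like `κ ^ length`. Testing
it on two distinct directions outside `M`, at which the density is at least of order
`1 / ‖A_w x‖ ^ 2`, gives growth of the norm at rate `κ ^ (-1/2)`. -/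
theorem unifHyp_of_multicone {N : ℕ} (A : Fin N → SL2) {M : Set P1} (hne : M.Nonempty)
    (hM : IsOpen M) (hcl : closure M ≠ Set.univ)
    (hinv : ∀ i, projAct (A i) '' closure M ⊆ M) : UnifHyp A := by
  obtain ⟨c₀, hc₀, htr⟩ := exists_transversality (isClosed_iUnion_image A M) hM
    (Set.iUnion_subset hinv)
  obtain ⟨x₀, hx₀M⟩ := hne
  obtain ⟨x, hx, rfl⟩ := exists_mk_eq x₀
  obtain ⟨d, hd, htr'⟩ := exists_transversality (isClosed_singleton (x := Projectivization.mk ℝ x hx))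
    hM (Set.singleton_subset_iff.2 hx₀M)
  obtain ⟨p, q, hp, hq, hpq, hpM, hqM⟩ := exists_ne_notMem hcl
  have hxn := norm_pos_iff.2 hx
  have hpn := norm_pos_iff.2 hp
  have hqn := norm_pos_iff.2 hq
  -- The density at `x` is finite because `x` is an interior point of `M`.
  obtain ⟨r, hr, hr0⟩ : ∃ r > 0, HilbertBound M x r := by
    refine ⟨2 / (d * ‖x‖) ^ 2, by positivity, fun p q hp hq hpM hqM => ?_⟩
    have h1 := htr' x p hx hp rfl hpM
    have h2 := htr' x q hx hq rfl hqM
    calc |wedge p q| ≤ 2 * ‖p‖ * ‖q‖ := abs_wedge_le p q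
      _ = 2 / (d * ‖x‖) ^ 2 * (d * ‖x‖ * ‖p‖) * (d * ‖x‖ * ‖q‖) := by field_simp
      _ ≤ _ := by gcongr
  obtain ⟨c, hc, hc1, hcc⟩ : ∃ c > 0, c ≤ 1 ∧ c ≤ c₀ :=
    ⟨min c₀ 1, by positivity, min_le_right _ _, min_le_left _ _⟩
  set κ : ℝ := 1 - c / 4 * c / 2 with hκ
  have hκ0 : 0 < κ := by rw [hκ]; nlinarith
  have hκ1 : κ < 1 := by rw [hκ]; nlinarith
  have hind : ∀ (w : List (Fin N)) (x : Fin 2 → ℝ) (hx : x ≠ 0) (r : ℝ), 0 ≤ r →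
      Projectivization.mk ℝ x hx ∈ M → HilbertBound M x r →
      HilbertBound M ((wordProd A w).1 *ᵥ x) (κ ^ w.length * r) := by
    intro w
    induction w with
    | nil => intro x hx r hr hxM h; simpa [wordProd_nil] using h
    | cons i w ih =>
      intro x hx r hr hxM h
      have hstep := h.step (B := A i) hc (Set.iUnion_subset hinv)
        ((Set.image_mono subset_closure).trans
          (Set.subset_iUnion (fun i => projAct (A i) '' closure M) i))
        (fun y p hy hp hyL hpM => le_trans (by gcongr) (htr y p hy hp hyL hpM)) hx hxM hr
        (ε := c / 4) (by positivity) (by linarith) (by nlinarith)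
      have := ih _ (mulVec_ne_zero (A i) hx) _ (by positivity)
        (hinv i ⟨_, subset_closure hxM, projAct_mk _ hx⟩) hstep
      rw [wordProd_cons, Matrix.SpecialLinearGroup.coe_mul, ← Matrix.mulVec_mulVec]
      rw [List.length_cons, pow_succ, mul_assoc]
      exact this
  set l : ℝ := (√κ)⁻¹ with hl
  have hsk : 0 < √κ := Real.sqrt_pos.2 hκ0
  have hsk1 : √κ < 1 := by rw [Real.sqrt_lt' one_pos]; simpa using hκ1
  set D : ℝ := |wedge p q| / (16 * r * ‖x‖ ^ 2 * ‖p‖ * ‖q‖) with hD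
  have hD0 : 0 < D := by have := abs_pos.2 hpq; positivity
  refine ⟨√D, Real.sqrt_pos.2 hD0, l, (one_lt_inv₀ hsk).2 hsk1, fun w _ => ?_⟩
  have h := hind w x hx r hr.le hx₀M hr0 p q hp hq hpM hqM
  set y := (wordProd A w).1 *ᵥ x with hy
  have hyx : ‖y‖ ≤ 2 * opNorm (wordProd A w).1 * ‖x‖ :=
    (norm_mulVec_le _ _).trans (by gcongr; exact maxEntry_le_opNorm _)
  have hop : 0 ≤ opNorm (wordProd A w).1 := norm_nonneg _
  have h1 : |wedge p q| ≤ κ ^ w.length * r * (2 * (2 * opNorm (wordProd A w).1 * ‖x‖) * ‖p‖) *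
      (2 * (2 * opNorm (wordProd A w).1 * ‖x‖) * ‖q‖) := by
    refine h.trans ?_
    have := (abs_wedge_le y p).trans (by gcongr :
      2 * ‖y‖ * ‖p‖ ≤ 2 * (2 * opNorm (wordProd A w).1 * ‖x‖) * ‖p‖)
    have := (abs_wedge_le y q).trans (by gcongr :
      2 * ‖y‖ * ‖q‖ ≤ 2 * (2 * opNorm (wordProd A w).1 * ‖x‖) * ‖q‖)
    gcongr
  have h2 : D ≤ κ ^ w.length * opNorm (wordProd A w).1 ^ 2 := by
    rw [hD, div_le_iff₀ (by positivity)]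
    linarith
  rw [ge_iff_le, hl, inv_pow, ← div_eq_mul_inv, div_le_iff₀ (by positivity)]
  refine Real.sqrt_le_iff.2 ⟨by positivity, h2.trans (le_of_eq ?_)⟩
  rw [mul_pow, ← pow_mul, mul_comm w.length, pow_mul, Real.sq_sqrt hκ0.le]
  ring

/-! ### Trimming to finitely many components -/

/-- In a regular locally connected space, a compact subset of an open set `M` can be enclosed in
an open set inside `M` with finitely many components, whose closures are pairwise disjoint. -/
theorem exists_finComp {L M : Set P1} (hL : IsCompact L) (hM : IsOpen M) (hLM : L ⊆ M) :
    ∃ M' : Set P1, IsOpen M' ∧ L ⊆ M' ∧ M' ⊆ M ∧ FinCompDisjClosures M' := by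
  classical
  -- Consider finite covers of `L` by connected open sets with closure in `M`.
  let G : Set P1 → Prop := fun U => IsOpen U ∧ IsConnected U ∧ closure U ⊆ M
  let F : Finset (Set P1) → Prop := fun S => (∀ U ∈ S, G U) ∧ L ⊆ ⋃ U ∈ S, U
  have hloc : ∀ x ∈ M, ∃ U, G U ∧ x ∈ U := by
    intro x hx
    obtain ⟨V, ⟨hV, hVc⟩, hVM⟩ := (closed_nhds_basis x).mem_iff.1 (hM.mem_nhds hx)
    obtain ⟨U, ⟨hUo, hxU, hUc⟩, hUV⟩ :=
      (LocallyConnectedSpace.open_connected_basis x).mem_iff.1 hV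
    exact ⟨U, ⟨hUo, hUc, (closure_minimal hUV hVc).trans hVM⟩, hxU⟩
  have hex : ∃ n, ∃ S, F S ∧ S.card = n := by
    choose! U hU using hloc
    obtain ⟨t, ht, htL⟩ := hL.elim_nhds_subcover U
      (fun x hx => (hU x (hLM hx)).1.1.mem_nhds (hU x (hLM hx)).2)
    refine ⟨_, t.image U, ⟨?_, ?_⟩, rfl⟩
    · intro V hV
      obtain ⟨x, hx, rfl⟩ := Finset.mem_image.1 hV
      exact (hU x (hLM (ht x hx))).1
    · simpa using htL
  -- In a cover with the least number of members the closures are disjoint: two members whose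
  -- closures meet could be merged into one by adding a small neighbourhood of a common point.
  obtain ⟨S, ⟨hSG, hSL⟩, hcard⟩ := Nat.find_spec hex
  have hdisj : ∀ U ∈ S, ∀ V ∈ S, U ≠ V → closure U ∩ closure V = ∅ := by
    intro U hU V hV hUV
    by_contra hne
    obtain ⟨x, hxU, hxV⟩ := Set.nonempty_iff_ne_empty.2 hne
    obtain ⟨W, hW, hxW⟩ := hloc x ((hSG U hU).2.2 hxU)
    have hUW : (U ∩ W).Nonempty := by
      rw [Set.inter_comm]; exact mem_closure_iff.1 hxU W hW.1 hxW
    have hVW : (V ∩ W).Nonempty := by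
      rw [Set.inter_comm]; exact mem_closure_iff.1 hxV W hW.1 hxW
    have hbig : G (U ∪ W ∪ V) := by
      refine ⟨((hSG U hU).1.union hW.1).union (hSG V hV).1, ?_, ?_⟩
      · refine ((hSG U hU).2.1.union hUW hW.2.1).union ?_ (hSG V hV).2.1
        exact hVW.mono fun z hz => ⟨Or.inr hz.2, hz.1⟩
      · rw [closure_union, closure_union]
        exact Set.union_subset (Set.union_subset (hSG U hU).2.2 hW.2.2) (hSG V hV).2.2
    let S' := insert (U ∪ W ∪ V) ((S.erase U).erase V)
    have hV' : V ∈ S.erase U := Finset.mem_erase.2 ⟨hUV.symm, hV⟩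
    have hlt : S'.card < Nat.find hex := by
      rw [← hcard]
      have h1 := Finset.card_erase_add_one hV'
      have h2 := Finset.card_erase_add_one hU
      have h3 : S'.card ≤ _ := Finset.card_insert_le (U ∪ W ∪ V) ((S.erase U).erase V)
      omega
    refine Nat.find_min hex hlt ⟨S', ⟨?_, ?_⟩, rfl⟩
    · intro Z hZ
      rcases Finset.mem_insert.1 hZ with rfl | hZ
      · exact hbig
      · exact hSG Z (Finset.mem_of_mem_erase (Finset.mem_of_mem_erase hZ))
    · intro z hz
      obtain ⟨Z, hZS, hzZ⟩ := Set.mem_iUnion₂.1 (hSL hz)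
      refine Set.mem_iUnion₂.2 ?_
      by_cases h1 : Z = U
      · exact ⟨_, Finset.mem_insert_self _ _, Or.inl (Or.inl (h1 ▸ hzZ))⟩
      by_cases h2 : Z = V
      · exact ⟨_, Finset.mem_insert_self _ _, Or.inr (h2 ▸ hzZ)⟩
      · exact ⟨Z, Finset.mem_insert_of_mem (Finset.mem_erase.2 ⟨h2, Finset.mem_erase.2 ⟨h1, hZS⟩⟩),
          hzZ⟩
  have hcomp : ∀ x, ∀ U ∈ S, x ∈ U → connectedComponentIn (⋃ U ∈ S, U) x = U := by
    intro x U hU hxU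
    have hxM : x ∈ ⋃ U ∈ S, U := Set.mem_iUnion₂.2 ⟨U, hU, hxU⟩
    refine Set.Subset.antisymm ?_
      ((hSG U hU).2.1.isPreconnected.subset_connectedComponentIn hxU
        (Set.subset_biUnion_of_mem (u := fun U : Set P1 => U) hU))
    -- `U` and the union of the other members separate the union of `S`
    refine isPreconnected_connectedComponentIn.subset_left_of_subset_union (hSG U hU).1
      (v := ⋃ V ∈ S.erase U, V)
      (isOpen_biUnion fun V hV => (hSG V (Finset.mem_of_mem_erase hV)).1) ?_ ?_
      ⟨x, mem_connectedComponentIn hxM, hxU⟩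
    · rw [Set.disjoint_iUnion₂_right]
      intro V hV
      obtain ⟨hVU, hVS⟩ := Finset.mem_erase.1 hV
      rw [Set.disjoint_iff_inter_eq_empty, ← Set.subset_empty_iff,
        ← hdisj U hU V hVS (Ne.symm hVU)]
      exact Set.inter_subset_inter subset_closure subset_closure
    · refine (connectedComponentIn_subset _ _).trans fun z hz => ?_
      obtain ⟨V, hV, hzV⟩ := Set.mem_iUnion₂.1 hz
      by_cases hVU : V = U
      · exact Or.inl (hVU ▸ hzV)
      · exact Or.inr (Set.mem_iUnion₂.2 ⟨V, Finset.mem_erase.2 ⟨hVU, hV⟩, hzV⟩)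
  refine ⟨⋃ U ∈ S, U, isOpen_biUnion fun U hU => (hSG U hU).1, hSL,
    Set.iUnion₂_subset fun U hU => subset_closure.trans (hSG U hU).2.2, ?_, ?_⟩
  · refine S.finite_toSet.subset ?_
    rintro C ⟨x, hx, rfl⟩
    obtain ⟨U, hU, hxU⟩ := Set.mem_iUnion₂.1 hx
    rw [hcomp x U hU hxU]
    exact hU
  · intro x hx y hy hne
    obtain ⟨U, hU, hxU⟩ := Set.mem_iUnion₂.1 hx
    obtain ⟨V, hV, hyV⟩ := Set.mem_iUnion₂.1 hy
    rw [hcomp x U hU hxU, hcomp y V hV hyV] at hne ⊢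
    exact hdisj U hU V hV hne

/-! ### Contracted directions along a word -/

/-- Quantitative uniform hyperbolicity, measured by the largest entry, together with a bound on
the generators. -/
structure UnifGrowth {N : ℕ} (A : Fin N → SL2) (c lam R : ℝ) : Prop where
  c_pos : 0 < c
  one_lt : 1 < lam
  one_le : 1 ≤ R
  entry_le : ∀ i, maxEntry (A i).1 ≤ R
  growth : ∀ w, c * lam ^ w.length ≤ maxEntry (wordProd A w).1

/-- The constant in `exists_short_contracting`; only its affine dependence on `L` matters. -/
noncomputable def contractConst (lam R : ℝ) (L : ℕ) : ℝ :=
  2 * R + 2 * (1 + 8 * R * lam / (lam - 1) + 16 * R ^ 2 * L)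

theorem contractConst_pos {lam R : ℝ} (hlam : 1 < lam) (hR : 1 ≤ R) (L : ℕ) :
    0 < contractConst lam R L := by
  have : 0 < lam - 1 := by linarith
  unfold contractConst
  positivity

/-- Let `B j` be successive products with `maxEntry (B j) ≥ c λ^j`. If the last product barely
expands `v`, then some product `B k`, of size about `T = c λ^L`, contracts `v` to length
`O(L / T)`.

The contracted directions `s j` of `B j` satisfy `|s j ∧ s (j+1)| ≲ 1 / (a j * a (j+1))`, where
`a j = maxEntry (B j)`. The index `k` is the last one with `a k ≤ T`: beyond it every `a j` exceeds
`T`, so the at most `L` terms before `L` contribute `O(L / T²)` and the terms after `L` form a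
geometric series of size `O(1 / T²)`. -/
theorem exists_short_contracting {B : ℕ → SL2} {c lam R T : ℝ} {n L : ℕ} {v : Fin 2 → ℝ}
    (hc : 0 < c) (hlam : 1 < lam) (hR : 1 ≤ R) (hB0 : B 0 = 1)
    (hstep : ∀ j < n, maxEntry (B (j + 1) * (B j)⁻¹).1 ≤ R)
    (hgrow : ∀ j ≤ n, c * lam ^ j ≤ maxEntry (B j).1) (hT : T = c * lam ^ L) (hT1 : 1 ≤ T)
    (hLn : L < n) (hv : ‖v‖ = 1)
    (hvn : 2 * ‖(B n).1 *ᵥ v‖ / maxEntry (B n).1 ≤ 1 / T ^ 2) :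
    ∃ k ≤ L, maxEntry (B k).1 ≤ T ∧ T ≤ 2 * R * maxEntry (B k).1 ∧
      ‖(B k).1 *ᵥ v‖ ≤ contractConst lam R L / T := by
  have hapos : ∀ j, 0 < maxEntry (B j).1 := fun j => maxEntry_pos _
  have hTpos : 0 < T := by linarith
  have hlam0 : 0 < lam := by linarith
  have hlam1 : 0 < lam - 1 := by linarith
  have hRpos : 0 < R := by linarith
  choose s hs1 hs using fun j => exists_contracted (B j)
  set a : ℕ → ℝ := fun j => maxEntry (B j).1 with ha
  set k := Nat.findGreatest (fun j => a j ≤ T) n with hk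
  have ha0 : a 0 ≤ T := by simp only [ha, hB0, maxEntry_one]; exact hT1
  have hak : a k ≤ T := Nat.findGreatest_spec (P := fun j => a j ≤ T) (Nat.zero_le n) ha0
  have hkn' : k ≤ n := Nat.findGreatest_le n
  have hbig : ∀ j, k < j → j ≤ n → T < a j := fun j h1 h2 =>
    not_le.1 (Nat.findGreatest_is_greatest h1 h2)
  have hkL : k ≤ L := by
    by_contra h
    have h1 := hgrow k hkn'
    have h2 : c * lam ^ L < c * lam ^ k := by
      exact mul_lt_mul_of_pos_left (pow_lt_pow_right₀ hlam (by omega)) hc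
    have : a k = maxEntry (B k).1 := rfl
    linarith
  have hBs : ∀ j, B (j + 1) = (B (j + 1) * (B j)⁻¹) * B j := fun j => by group
  have hnext : ∀ j < n, a (j + 1) ≤ 2 * R * a j := by
    intro j hj
    simp only [ha]
    calc maxEntry (B (j + 1)).1 = maxEntry ((B (j + 1) * (B j)⁻¹).1 * (B j).1) := by
          rw [← Matrix.SpecialLinearGroup.coe_mul, ← hBs]
      _ ≤ _ := (maxEntry_mul_le _ _).trans (by
          have := maxEntry_nonneg (B j).1
          gcongr
          exact hstep j hj)
  have hTak : T ≤ 2 * R * a k := (hbig (k + 1) (by omega) (by omega)).le.trans (hnext k (by omega))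
  have hss : ∀ j < n, |wedge (s (j + 1)) (s j)| ≤ 4 * R / (a j * a (j + 1)) := by
    intro j hj
    rw [abs_wedge_comm, ← wedge_mulVec (B (j + 1))]
    refine (abs_wedge_le _ _).trans ?_
    have h1 : ‖(B (j + 1)).1 *ᵥ s j‖ ≤ 2 * R * (1 / a j) := by
      rw [hBs j, Matrix.SpecialLinearGroup.coe_mul, ← Matrix.mulVec_mulVec]
      refine (norm_mulVec_le _ _).trans ?_
      gcongr
      · exact hstep j hj
      · exact hs j
    calc 2 * ‖(B (j + 1)).1 *ᵥ s j‖ * ‖(B (j + 1)).1 *ᵥ s (j + 1)‖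
        ≤ 2 * (2 * R * (1 / a j)) * (1 / a (j + 1)) := by
          have := (hapos j).le
          exact mul_le_mul (by linarith) (hs (j + 1)) (norm_nonneg _) (by positivity)
      _ = _ := by
          have := (hapos j).ne'
          have := (hapos (j + 1)).ne'
          field_simp
          ring
  set E : ℕ → ℝ := fun j => |wedge v (s j)| with hE
  have hEstep : ∀ j < n, E j ≤ E (j + 1) + 8 * R / (a j * a (j + 1)) := by
    intro j hj
    obtain ⟨t, ht, htd⟩ := exists_decomp (s j) (s (j + 1)) (hs1 _)
    rw [hs1] at ht
    have h1 : wedge v (s j) = t * wedge v (s (j + 1)) + wedge v (s j - t • s (j + 1)) := by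
      rw [wedge_sub_right, wedge_smul_right]; ring
    have h2 := abs_wedge_le v (s j - t • s (j + 1))
    rw [hv] at h2
    have h3 := hss j hj
    rw [abs_wedge_comm] at h3
    have h4 : 8 * R / (a j * a (j + 1)) = 2 * (4 * R / (a j * a (j + 1))) := by ring
    calc E j ≤ |t * wedge v (s (j + 1))| + |wedge v (s j - t • s (j + 1))| := by
          simp only [hE]; rw [h1]; exact abs_add_le _ _
      _ ≤ 1 * E (j + 1) + 2 * 1 * (4 * R / (a j * a (j + 1))) := by
          rw [abs_mul]
          exact add_le_add (by gcongr) (h2.trans (by gcongr; exact htd.trans h3))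
      _ = _ := by rw [h4]; ring
  have hEn : E n ≤ 1 / T ^ 2 := by
    refine le_trans ?_ hvn
    simp only [hE]
    rw [← wedge_mulVec (B n)]
    refine (abs_wedge_le _ _).trans ?_
    rw [div_eq_mul_one_div]
    gcongr
    exact hs n
  set G : ℝ := 8 * R * lam / (lam - 1) with hG
  have htail : ∀ i j, j + i = n → L ≤ j → E j ≤ E n + G / (T ^ 2 * lam ^ (j - L)) := by
    intro i
    induction i with
    | zero =>
      intro j hj _
      have : j = n := by omega
      subst this
      have : 0 ≤ G / (T ^ 2 * lam ^ (j - L)) := by positivity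
      linarith
    | succ i ih =>
      intro j hj hLj
      have h1 := hEstep j (by omega)
      have h2 := ih (j + 1) (by omega) (by omega)
      have e1 : j + 1 - L = (j - L) + 1 := by omega
      have h3 : T * lam ^ (j - L) ≤ a j := by
        have := hgrow j (by omega)
        rw [hT, mul_assoc, ← pow_add]
        convert this using 3
        omega
      have h4 : T ≤ a (j + 1) := (hbig (j + 1) (by omega) (by omega)).le
      have h5 : 8 * R / (a j * a (j + 1)) ≤ 8 * R / (T ^ 2 * lam ^ (j - L)) := by
        have h7 : T ^ 2 * lam ^ (j - L) ≤ a j * a (j + 1) :=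
          calc T ^ 2 * lam ^ (j - L) = T * lam ^ (j - L) * T := by ring
            _ ≤ _ := mul_le_mul h3 h4 hTpos.le (hapos j).le
        exact div_le_div_of_nonneg_left (by positivity) (by positivity) h7
      have h6 : G / (T ^ 2 * lam ^ (j - L)) =
          G / (T ^ 2 * lam ^ (j + 1 - L)) + 8 * R / (T ^ 2 * lam ^ (j - L)) := by
        rw [hG, e1, pow_succ]
        field_simp
        ring
      linarith
  have hhead : ∀ i j, j + i = L → k ≤ j → E j ≤ E n + (G + 16 * R ^ 2 * i) / T ^ 2 := by
    intro i
    induction i with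
    | zero =>
      intro j hj _
      have : j = L := by omega
      subst this
      simpa using htail (n - j) j (by omega) le_rfl
    | succ i ih =>
      intro j hj hkj
      have h1 := hEstep j (by omega)
      have h2 := ih (j + 1) (by omega) (by omega)
      have h3 : T / (2 * R) ≤ a j := by
        rw [div_le_iff₀ (by positivity), mul_comm]
        rcases hkj.eq_or_lt with rfl | hlt
        · exact hTak
        · have := hbig j hlt (by omega)
          nlinarith
      have h4 : T ≤ a (j + 1) := (hbig (j + 1) (by omega) (by omega)).le
      have h5 : 8 * R / (a j * a (j + 1)) ≤ 8 * R / (T / (2 * R) * T) := by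
        gcongr
        exact (hapos j).le
      have h6 : 8 * R / (T / (2 * R) * T) = 16 * R ^ 2 / T ^ 2 := by
        field_simp; ring
      have h7 : (G + 16 * R ^ 2 * ((i + 1 : ℕ) : ℝ)) / T ^ 2 =
          (G + 16 * R ^ 2 * i) / T ^ 2 + 16 * R ^ 2 / T ^ 2 := by
        push_cast; ring
      linarith
  have hEk : E k ≤ (1 + G + 16 * R ^ 2 * L) / T ^ 2 := by
    have h1 := hhead (L - k) k (by omega) le_rfl
    have h2 : ((L - k : ℕ) : ℝ) ≤ L := by exact_mod_cast Nat.sub_le _ _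
    calc E k ≤ _ := h1
      _ ≤ 1 / T ^ 2 + (G + 16 * R ^ 2 * L) / T ^ 2 := by gcongr
      _ = _ := by ring
  refine ⟨k, hkL, hak, hTak, ?_⟩
  obtain ⟨t, ht, htd⟩ := exists_decomp v (s k) (hs1 _)
  rw [hv] at ht
  have h1 : (B k).1 *ᵥ v = t • ((B k).1 *ᵥ s k) + (B k).1 *ᵥ (v - t • s k) := by
    rw [Matrix.mulVec_sub, Matrix.mulVec_smul]; abel
  have h2 : 1 / a k ≤ 2 * R / T := by
    rw [div_le_div_iff₀ (hapos k) hTpos]; linarith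
  calc ‖(B k).1 *ᵥ v‖ ≤ ‖t • ((B k).1 *ᵥ s k)‖ + ‖(B k).1 *ᵥ (v - t • s k)‖ := by
        rw [h1]; exact norm_add_le _ _
    _ ≤ 1 * (2 * R / T) + 2 * T * ((1 + G + 16 * R ^ 2 * L) / T ^ 2) := by
        gcongr
        · rw [norm_smul, Real.norm_eq_abs]
          gcongr
          exact (hs k).trans h2
        · refine (norm_mulVec_le _ _).trans ?_
          gcongr
          exact htd.trans hEk
    _ = contractConst lam R L / T := by
        rw [contractConst, ← hG]
        field_simp

/-! ### Uniform growth of words and of their inverses -/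

theorem UnifHyp.exists_unifGrowth {N : ℕ} {A : Fin N → SL2} (h : UnifHyp A) :
    ∃ c lam R, UnifGrowth A c lam R := by
  obtain ⟨C, hC, lam, hlam, h⟩ := h
  refine ⟨min (C / 4) 1, lam, 1 + ∑ i, maxEntry (A i).1, by positivity, hlam, ?_, ?_, ?_⟩
  · linarith [Finset.sum_nonneg fun i (_ : i ∈ Finset.univ) => maxEntry_nonneg (A i).1]
  · intro i
    have := Finset.single_le_sum (f := fun i => maxEntry (A i).1)
      (fun i _ => maxEntry_nonneg _) (Finset.mem_univ i)
    exact this.trans (by linarith)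
  · intro w
    rcases eq_or_ne w [] with rfl | hw
    · rw [wordProd_nil, maxEntry_one]
      simp
    · have h1 := (h w hw).le.trans (opNorm_le _)
      have h2 : min (C / 4) 1 * lam ^ w.length ≤ C / 4 * lam ^ w.length := by
        gcongr
        exact min_le_left _ _
      linarith

theorem wordProd_inv {N : ℕ} (A : Fin N → SL2) (w : List (Fin N)) :
    wordProd (fun i => (A i)⁻¹) w = (wordProd A w.reverse)⁻¹ := by
  simp [wordProd, List.prod_inv_reverse, List.map_reverse, Function.comp_def]

theorem UnifGrowth.inv {N : ℕ} {A : Fin N → SL2} {c lam R : ℝ} (h : UnifGrowth A c lam R) :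
    UnifGrowth (fun i => (A i)⁻¹) c lam R where
  c_pos := h.c_pos
  one_lt := h.one_lt
  one_le := h.one_le
  entry_le i := by rw [maxEntry_inv]; exact h.entry_le i
  growth w := by
    rw [wordProd_inv, maxEntry_inv]
    simpa using h.growth w.reverse

theorem UnifGrowth.entry_le_pow {N : ℕ} {A : Fin N → SL2} {c lam R : ℝ}
    (h : UnifGrowth A c lam R) (w : List (Fin N)) :
    maxEntry (wordProd A w).1 ≤ (2 * R) ^ w.length := by
  have hR := h.one_le
  induction w with
  | nil => rw [wordProd_nil, maxEntry_one, List.length_nil, pow_zero]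
  | cons i w ih =>
    rw [wordProd_cons, Matrix.SpecialLinearGroup.coe_mul, List.length_cons, pow_succ]
    refine (maxEntry_mul_le _ _).trans ?_
    have h1 := maxEntry_nonneg (A i).1
    calc 2 * maxEntry (wordProd A w).1 * maxEntry (A i).1
        ≤ 2 * (2 * R) ^ w.length * R := by gcongr; exact h.entry_le i
      _ = _ := by ring

open Filter Topology in
theorem eventually_pow_contractConst_lt {c lam R : ℝ} (hc : 0 < c) (hlam : 1 < lam) (hR : 1 ≤ R)
    {K : ℝ} (hK : 0 ≤ K) (q : ℕ) :
    ∀ᶠ L : ℕ in atTop, (K * contractConst lam R L) ^ q < c * lam ^ L := by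
  have hlam0 : 0 < lam := by linarith
  have h1 := (tendsto_add_atTop_iff_nat 1).2 (tendsto_pow_const_div_const_pow_of_one_lt q hlam)
  set D := (K * contractConst lam R 1) ^ q + 1 with hD
  have hD0 : 0 < D := by have := contractConst_pos hlam hR 1; positivity
  filter_upwards [h1.eventually_lt_const (show 0 < c / (D * lam) by positivity)] with L hL
  have h2 : contractConst lam R L ≤ contractConst lam R 1 * ((L + 1 : ℕ) : ℝ) := by
    have : 0 < lam - 1 := by linarith
    have h3 : contractConst lam R 1 * ((L + 1 : ℕ) : ℝ) - contractConst lam R L =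
        (2 * R + 2 * (1 + 8 * R * lam / (lam - 1))) * L + 32 * R ^ 2 := by
      simp only [contractConst]; push_cast; ring
    have : 0 ≤ (2 * R + 2 * (1 + 8 * R * lam / (lam - 1))) * L + 32 * R ^ 2 := by positivity
    linarith
  have h0 := (contractConst_pos hlam hR L).le
  rw [div_lt_div_iff₀ (by positivity) (by positivity), pow_succ] at hL
  have h4 : (K * contractConst lam R L) ^ q ≤ D * ((L + 1 : ℕ) : ℝ) ^ q := by
    calc (K * contractConst lam R L) ^ q ≤
        (K * (contractConst lam R 1 * ((L + 1 : ℕ) : ℝ))) ^ q := by gcongr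
      _ = (K * contractConst lam R 1) ^ q * ((L + 1 : ℕ) : ℝ) ^ q := by rw [← mul_assoc, mul_pow]
      _ ≤ _ := by gcongr; rw [hD]; linarith
  refine h4.trans_lt ?_
  have h5 : (D * ((L + 1 : ℕ) : ℝ) ^ q) * lam < (c * lam ^ L) * lam := by linarith
  exact lt_of_mul_lt_mul_right h5 hlam0.le

/-- The exponentially weighted length of the image of `v` along the word `w`. -/
noncomputable def rate {N : ℕ} (A : Fin N → SL2) (mu : ℝ) (w : List (Fin N)) (v : Fin 2 → ℝ) : ℝ :=
  ‖(wordProd A w).1 *ᵥ v‖ / mu ^ w.length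

theorem rate_nonneg {N : ℕ} (A : Fin N → SL2) {mu : ℝ} (hmu : 1 < mu) (w : List (Fin N))
    (v : Fin 2 → ℝ) : 0 ≤ rate A mu w v := by
  unfold rate; positivity

theorem rate_le_iff {N : ℕ} (A : Fin N → SL2) {mu : ℝ} (hmu : 1 < mu) (w : List (Fin N))
    (v : Fin 2 → ℝ) {r : ℝ} : rate A mu w v ≤ r ↔ ‖(wordProd A w).1 *ᵥ v‖ ≤ r * mu ^ w.length := by
  rw [rate, div_le_iff₀ (by positivity)]

theorem rate_cons {N : ℕ} (A : Fin N → SL2) {mu : ℝ} (hmu : 1 < mu) (i : Fin N)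
    (w : List (Fin N)) (v : Fin 2 → ℝ) :
    rate A mu (i :: w) v = rate A mu w ((A i).1 *ᵥ v) / mu := by
  have : mu ≠ 0 := by linarith
  rw [rate, rate, wordProd_cons, Matrix.SpecialLinearGroup.coe_mul, ← Matrix.mulVec_mulVec,
    List.length_cons, pow_succ, div_div]

open Filter Topology in
/-- A word that barely expands `v` has a prefix of controlled size `≈ T = c λ^L` contracting `v` to
length `O(L / T)`; this is `exists_short_contracting` applied to the prefixes of the word. -/
theorem UnifGrowth.exists_short_of_long {N : ℕ} {A : Fin N → SL2} {c lam R mu : ℝ}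
    (h : UnifGrowth A c lam R) (hmu : 1 < mu) (hmul : mu < lam) {L : ℕ} (hL : 1 ≤ c * lam ^ L) :
    ∃ n0, L < n0 ∧ ∀ w v, n0 ≤ w.length → ‖v‖ = 1 → rate A mu w v ≤ 1 →
      ∃ w', w'.length ≤ L ∧ maxEntry (wordProd A w').1 ≤ c * lam ^ L ∧
        c * lam ^ L ≤ 2 * R * maxEntry (wordProd A w').1 ∧
        ‖(wordProd A w').1 *ᵥ v‖ ≤ contractConst lam R L / (c * lam ^ L) := by
  have hc := h.c_pos
  have hlam := h.one_lt
  have hlam0 : 0 < lam := by linarith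
  have hmu0 : 0 < mu := by linarith
  set T := c * lam ^ L with hT
  have hT0 : 0 < T := by positivity
  have h1 : Tendsto (fun n : ℕ => 2 / c * (mu / lam) ^ n) atTop (𝓝 0) := by
    have := (tendsto_pow_atTop_nhds_zero_of_lt_one (by positivity : 0 ≤ mu / lam)
      ((div_lt_one hlam0).2 hmul)).const_mul (2 / c)
    simpa using this
  obtain ⟨n1, hn1⟩ := eventually_atTop.1
    (h1.eventually_lt_const (show 0 < 1 / T ^ 2 by positivity))
  refine ⟨max n1 (L + 1), by omega, fun w v hw hv hwv => ?_⟩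
  rw [rate_le_iff A hmu, one_mul] at hwv
  have hbound : 2 * ‖(wordProd A w).1 *ᵥ v‖ / maxEntry (wordProd A w).1 ≤ 1 / T ^ 2 := by
    refine le_trans ?_ (hn1 w.length (by omega)).le
    calc 2 * ‖(wordProd A w).1 *ᵥ v‖ / maxEntry (wordProd A w).1
        ≤ 2 * mu ^ w.length / (c * lam ^ w.length) := by
          gcongr
          exact h.growth w
      _ = _ := by rw [div_pow]; field_simp
  obtain ⟨k, hk, hk1, hk2, hk3⟩ := exists_short_contracting (B := fun j => wordProd A (w.take j))
    (n := w.length) (v := v) hc hlam h.one_le (by simp [wordProd_nil])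
    (fun j hj => by
      have : w.take (j + 1) = w.take j ++ [w[j]] := by simp
      rw [this, wordProd_append, mul_assoc, mul_inv_cancel, mul_one, wordProd_cons, wordProd_nil,
        one_mul]
      exact h.entry_le _)
    (fun j hj => by
      have := h.growth (w.take j)
      rwa [List.length_take, min_eq_left hj] at this)
    hT hL (by omega) hv (by simpa using hbound)
  exact ⟨w.take k, (List.length_take_le _ _).trans hk, hk1, hk2, hk3⟩

/-- If a long word barely expands `v`, then a short word strongly contracts it. -/
theorem UnifGrowth.exists_short {N : ℕ} {A : Fin N → SL2} {c lam R mu : ℝ}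
    (h : UnifGrowth A c lam R) (hmu : 1 < mu) (hmul : mu < lam) {η : ℝ} (hη : 0 < η) :
    ∃ n0, ∀ w v, n0 ≤ w.length → ‖v‖ = 1 → rate A mu w v ≤ 1 →
      ∃ w', w'.length < n0 ∧ rate A mu w' v < η := by
  have hc := h.c_pos
  have hlam := h.one_lt
  have hlam0 : 0 < lam := by linarith
  obtain ⟨L, hL1, hL2⟩ := ((eventually_pow_contractConst_lt hc hlam h.one_le (K := 0) le_rfl 0).and
    (eventually_pow_contractConst_lt hc hlam h.one_le (K := 1 / η) (by positivity) 1)).exists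
  rw [pow_zero] at hL1
  obtain ⟨n0, hLn, hn0⟩ := h.exists_short_of_long hmu hmul hL1.le
  refine ⟨n0, fun w v hw hv hwv => ?_⟩
  obtain ⟨w', hw', -, -, hw'v⟩ := hn0 w v hw hv hwv
  refine ⟨w', by omega, ?_⟩
  have h1 : contractConst lam R L / (c * lam ^ L) < η := by
    rw [pow_one, div_mul_eq_mul_div, one_mul, div_lt_iff₀ hη] at hL2
    rw [div_lt_iff₀ (by positivity)]
    linarith
  calc rate A mu w' v ≤ ‖(wordProd A w').1 *ᵥ v‖ :=
        div_le_self (norm_nonneg _) (one_le_pow₀ hmu.le)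
    _ < η := hw'v.trans_lt h1

/-! ### No direction is contracted both by the past and by the future -/

/-- If `B` and `C`, of size at most `T`, both contract `v` to length `H / T`, then `B * C⁻¹` has
size `O(H)`: decompose `C⁻¹ x` along `v` and a vector of length `|v ∧ C⁻¹ x| = |C v ∧ x|`. -/
theorem maxEntry_mul_inv_le {B C : SL2} {T H : ℝ} {v : Fin 2 → ℝ} (hT : 0 < T)
    (hB : maxEntry B.1 ≤ T) (hC : maxEntry C.1 ≤ T) (hv : ‖v‖ = 1)
    (hBv : ‖B.1 *ᵥ v‖ ≤ H / T) (hCv : ‖C.1 *ᵥ v‖ ≤ H / T) :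
    maxEntry (B * C⁻¹).1 ≤ 6 * H := by
  have key : ∀ x : Fin 2 → ℝ, ‖x‖ = 1 → ‖(B * C⁻¹).1 *ᵥ x‖ ≤ 6 * H := by
    intro x hx
    set y := (C⁻¹).1 *ᵥ x with hy
    obtain ⟨t, ht, htd⟩ := exists_decomp y v hv
    have h1 : ‖y‖ ≤ 2 * T := by
      refine (norm_mulVec_le _ _).trans ?_
      rw [hx, mul_one, maxEntry_inv]
      linarith
    have h2 : |wedge y v| ≤ 2 * (H / T) := by
      rw [← wedge_mulVec C, hy, mulVec_inv_mulVec]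
      refine (abs_wedge_le _ _).trans ?_
      rw [hx]
      linarith
    have h3 : (B * C⁻¹).1 *ᵥ x = t • (B.1 *ᵥ v) + B.1 *ᵥ (y - t • v) := by
      rw [Matrix.SpecialLinearGroup.coe_mul, ← Matrix.mulVec_mulVec, Matrix.mulVec_sub,
        Matrix.mulVec_smul]
      abel
    have hm := maxEntry_nonneg B.1
    calc ‖(B * C⁻¹).1 *ᵥ x‖ ≤ ‖t • (B.1 *ᵥ v)‖ + ‖B.1 *ᵥ (y - t • v)‖ := by
          rw [h3]; exact norm_add_le _ _
      _ ≤ 2 * T * (H / T) + 2 * T * (2 * (H / T)) := by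
          refine add_le_add ?_ ((norm_mulVec_le _ _).trans ?_)
          · rw [norm_smul, Real.norm_eq_abs]
            exact mul_le_mul (ht.trans h1) hBv (norm_nonneg _) (by positivity)
          · exact mul_le_mul (by linarith) (htd.trans h2) (norm_nonneg _) (by positivity)
      _ = 6 * H := by field_simp; ring
  have e0 := key ![1, 0] (by simp [norm_fin_two])
  have e1 := key ![0, 1] (by simp [norm_fin_two])
  refine maxEntry_le fun i j => ?_
  fin_cases j
  · have := (norm_le_pi_norm ((B * C⁻¹).1 *ᵥ ![1, 0]) i).trans e0
    simpa [Matrix.mulVec, dotProduct, Fin.sum_univ_two] using this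
  · have := (norm_le_pi_norm ((B * C⁻¹).1 *ᵥ ![0, 1]) i).trans e1
    simpa [Matrix.mulVec, dotProduct, Fin.sum_univ_two] using this

theorem UnifGrowth.le_length_of_rate_lt {N : ℕ} {A : Fin N → SL2} {c lam R mu : ℝ}
    (h : UnifGrowth A c lam R) (hmu : 1 < mu) {n0 : ℕ} {w : List (Fin N)} {v : Fin 2 → ℝ}
    (hv : ‖v‖ = 1) (hw : rate A mu w v < 1 / (2 * (2 * R * mu) ^ n0)) : n0 ≤ w.length := by
  by_contra! hlt
  have hR := h.one_le
  have hmu0 : 0 < mu := by linarith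
  have h1 := norm_le_mulVec (wordProd A w) v
  have h2 := h.entry_le_pow w
  have h3 : ‖(wordProd A w).1 *ᵥ v‖ = rate A mu w v * mu ^ w.length := by
    rw [rate, div_mul_cancel₀ _ (by positivity)]
  have h4 := rate_nonneg A hmu w v
  have h5 : (2 * R * mu) ^ w.length ≤ (2 * R * mu) ^ n0 :=
    pow_le_pow_right₀ (by nlinarith) hlt.le
  rw [lt_div_iff₀ (by positivity)] at hw
  have h6 : ‖v‖ ≤ 2 * (2 * R) ^ w.length * (rate A mu w v * mu ^ w.length) := by
    rw [← h3]
    exact h1.trans (by gcongr)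
  have h7 : 2 * (2 * R) ^ w.length * (rate A mu w v * mu ^ w.length) =
      rate A mu w v * (2 * (2 * R * mu) ^ w.length) := by
    rw [mul_pow (2 * R)]; ring
  have h8 : rate A mu w v * (2 * (2 * R * mu) ^ w.length) ≤
      rate A mu w v * (2 * (2 * R * mu) ^ n0) := by gcongr
  linarith

/-- A direction contracted at rate below `m` by some word of the `A i` is not contracted below `m`
by any word of the inverses. Otherwise, prefixes of the two words give `B`, `C` of size about
`T = c λ^L` contracting `v` to length `O(L / T)`; then `B * C⁻¹` has size `O(L)`, although it is
the product along a word whose length is at least proportional to `L`. -/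
theorem UnifGrowth.exists_not_both {N : ℕ} {A : Fin N → SL2} {c lam R mu : ℝ}
    (h : UnifGrowth A c lam R) (hmu : 1 < mu) (hmul : mu < lam) :
    ∃ m, 0 < m ∧ m ≤ 1 ∧ ∀ v, ‖v‖ = 1 → ∀ w w', rate A mu w v < m →
      m ≤ rate (fun i => (A i)⁻¹) mu w' v := by
  have hc := h.c_pos
  have hlam := h.one_lt
  have hR := h.one_le
  have hlam0 : 0 < lam := by linarith
  obtain ⟨q, hq⟩ := pow_unbounded_of_one_lt (2 * R) hlam
  obtain ⟨L, hL1, hL2⟩ := ((eventually_pow_contractConst_lt hc hlam hR (K := 0) le_rfl 0).and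
    (eventually_pow_contractConst_lt hc hlam hR (K := 6 * lam / c) (by positivity) q)).exists
  rw [pow_zero] at hL1
  obtain ⟨n1, -, hn1⟩ := h.exists_short_of_long hmu hmul hL1.le
  obtain ⟨n2, -, hn2⟩ := h.inv.exists_short_of_long hmu hmul hL1.le
  set n0 := max n1 n2
  have hbase : 1 ≤ 2 * R * mu := by nlinarith
  have hm1 : 1 / (2 * (2 * R * mu) ^ n0) ≤ 1 := by
    rw [div_le_one (by positivity)]
    linarith [one_le_pow₀ hbase (n := n0)]
  refine ⟨1 / (2 * (2 * R * mu) ^ n0), by positivity, hm1, fun v hv w w' hw => ?_⟩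
  by_contra! hw'
  have hl := h.le_length_of_rate_lt hmu hv hw
  have hl' := h.inv.le_length_of_rate_lt hmu hv hw'
  obtain ⟨u, -, hu1, hu2, hu3⟩ := hn1 w v (by omega) hv (hw.le.trans hm1)
  obtain ⟨u', -, hu1', -, hu3'⟩ := hn2 w' v (by omega) hv (hw'.le.trans hm1)
  have hP := maxEntry_mul_inv_le (by positivity) hu1 hu1' hv hu3 hu3'
  rw [wordProd_inv, inv_inv, ← wordProd_append] at hP
  have h1 := (h.growth _).trans hP
  have h2 : c * lam ^ u.length ≤ 6 * contractConst lam R L := by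
    have h0 : lam ^ u.length ≤ lam ^ (u'.reverse ++ u).length :=
      pow_le_pow_right₀ hlam.le (by simp)
    exact (mul_le_mul_of_nonneg_left h0 hc.le).trans h1
  have h3 : lam ^ (u.length + 1) ≤ 6 * lam / c * contractConst lam R L := by
    have : lam ^ u.length ≤ 6 * contractConst lam R L / c := by
      rw [le_div_iff₀ hc]; linarith
    calc lam ^ (u.length + 1) = lam ^ u.length * lam := pow_succ _ _
      _ ≤ 6 * contractConst lam R L / c * lam := by gcongr
      _ = _ := by ring
  have h4 : c * lam ^ L ≤ (2 * R) ^ (u.length + 1) := by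
    rw [pow_succ']
    exact hu2.trans (by gcongr; exact h.entry_le_pow u)
  have h5 : (2 * R) ^ (u.length + 1) ≤ (lam ^ (u.length + 1)) ^ q := by
    rw [← pow_mul, mul_comm (u.length + 1), pow_mul]
    exact pow_le_pow_left₀ (by positivity) hq.le _
  have h6 : (lam ^ (u.length + 1)) ^ q ≤ (6 * lam / c * contractConst lam R L) ^ q := by gcongr
  linarith

/-! ### The multicone of a uniformly hyperbolic tuple -/

/-- For words of length at most `n`, some word of the inverses contracts `v` at a better rate than
every word of the `A i`. Since the inverses contract exactly the unstable directions, this describes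
a neighbourhood of those. -/
def InCone {N : ℕ} (A : Fin N → SL2) (mu : ℝ) (n : ℕ) (v : Fin 2 → ℝ) : Prop :=
  ∃ w' : List (Fin N), w'.length ≤ n ∧ ∀ w : List (Fin N), w.length ≤ n →
    rate (fun i => (A i)⁻¹) mu w' v < rate A mu w v

/-- The variant of `InCone` with a weak inequality. -/
def InWeakCone {N : ℕ} (A : Fin N → SL2) (mu : ℝ) (n : ℕ) (v : Fin 2 → ℝ) : Prop :=
  ∃ w' : List (Fin N), w'.length ≤ n ∧ ∀ w : List (Fin N), w.length ≤ n →
    rate (fun i => (A i)⁻¹) mu w' v ≤ rate A mu w v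

theorem rate_smul {N : ℕ} (A : Fin N → SL2) (mu : ℝ) (w : List (Fin N)) (t : ℝ)
    (v : Fin 2 → ℝ) : rate A mu w (t • v) = |t| * rate A mu w v := by
  rw [rate, rate, Matrix.mulVec_smul, norm_smul, Real.norm_eq_abs, mul_div_assoc]

theorem inCone_smul {N : ℕ} (A : Fin N → SL2) (mu : ℝ) (n : ℕ) {t : ℝ} (ht : t ≠ 0)
    (v : Fin 2 → ℝ) : InCone A mu n (t • v) ↔ InCone A mu n v := by
  have := abs_pos.2 ht
  simp only [InCone, rate_smul, mul_lt_mul_iff_right₀ this]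

theorem inWeakCone_smul {N : ℕ} (A : Fin N → SL2) (mu : ℝ) (n : ℕ) {t : ℝ} (ht : t ≠ 0)
    (v : Fin 2 → ℝ) : InWeakCone A mu n (t • v) ↔ InWeakCone A mu n v := by
  have := abs_pos.2 ht
  simp only [InWeakCone, rate_smul, mul_le_mul_iff_right₀ this]

theorem continuous_rate {N : ℕ} (A : Fin N → SL2) (mu : ℝ) (w : List (Fin N)) :
    Continuous (rate A mu w) := by
  unfold rate
  exact ((continuous_const.matrix_mulVec continuous_id).norm).div_const _

/-- The set of directions satisfying `InCone`. -/
def coneSet {N : ℕ} (A : Fin N → SL2) (mu : ℝ) (n : ℕ) : Set P1 := {x | InCone A mu n x.rep}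

/-- The set of directions satisfying `InWeakCone`. -/
def weakConeSet {N : ℕ} (A : Fin N → SL2) (mu : ℝ) (n : ℕ) : Set P1 :=
  {x | InWeakCone A mu n x.rep}

theorem mk_mem_coneSet {N : ℕ} (A : Fin N → SL2) (mu : ℝ) (n : ℕ) {v : Fin 2 → ℝ} (hv : v ≠ 0) :
    Projectivization.mk ℝ v hv ∈ coneSet A mu n ↔ InCone A mu n v := by
  obtain ⟨t, ht⟩ := Projectivization.exists_smul_eq_mk_rep ℝ v hv
  change InCone A mu n _ ↔ _
  rw [← ht]
  exact inCone_smul A mu n t.ne_zero v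

theorem mk_mem_weakConeSet {N : ℕ} (A : Fin N → SL2) (mu : ℝ) (n : ℕ) {v : Fin 2 → ℝ}
    (hv : v ≠ 0) : Projectivization.mk ℝ v hv ∈ weakConeSet A mu n ↔ InWeakCone A mu n v := by
  obtain ⟨t, ht⟩ := Projectivization.exists_smul_eq_mk_rep ℝ v hv
  change InWeakCone A mu n _ ↔ _
  rw [← ht]
  exact inWeakCone_smul A mu n t.ne_zero v

theorem isOpen_coneSet {N : ℕ} (A : Fin N → SL2) (mu : ℝ) (n : ℕ) : IsOpen (coneSet A mu n) := by
  rw [← isQuotientMap_mk.isOpen_preimage]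
  have : Projectivization.mk' ℝ ⁻¹' coneSet A mu n = {v | InCone A mu n v.1} := by
    ext v
    exact mk_mem_coneSet A mu n v.2
  rw [this]
  have h2 : {v : {v : Fin 2 → ℝ // v ≠ 0} | InCone A mu n v.1} =
      ⋃ w' ∈ {w' : List (Fin N) | w'.length ≤ n}, ⋂ w ∈ {w : List (Fin N) | w.length ≤ n},
        {v | rate (fun i => (A i)⁻¹) mu w' v.1 < rate A mu w v.1} := by
    ext v
    simp [InCone]
  rw [h2]
  refine isOpen_biUnion fun w' _ => (List.finite_length_le (Fin N) n).isOpen_biInter fun w _ => ?_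
  exact isOpen_lt ((continuous_rate _ mu w').comp continuous_subtype_val)
    ((continuous_rate A mu w).comp continuous_subtype_val)

theorem isClosed_weakConeSet {N : ℕ} (A : Fin N → SL2) (mu : ℝ) (n : ℕ) :
    IsClosed (weakConeSet A mu n) := by
  rw [← isQuotientMap_mk.isClosed_preimage]
  have : Projectivization.mk' ℝ ⁻¹' weakConeSet A mu n = {v | InWeakCone A mu n v.1} := by
    ext v
    exact mk_mem_weakConeSet A mu n v.2
  rw [this]
  have h2 : {v : {v : Fin 2 → ℝ // v ≠ 0} | InWeakCone A mu n v.1} =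
      ⋃ w' ∈ {w' : List (Fin N) | w'.length ≤ n}, ⋂ w ∈ {w : List (Fin N) | w.length ≤ n},
        {v | rate (fun i => (A i)⁻¹) mu w' v.1 ≤ rate A mu w v.1} := by
    ext v
    simp [InWeakCone]
  rw [h2]
  refine (List.finite_length_le (Fin N) n).isClosed_biUnion fun w' _ =>
    isClosed_biInter fun w _ => ?_
  exact isClosed_le ((continuous_rate _ mu w').comp continuous_subtype_val)
    ((continuous_rate A mu w).comp continuous_subtype_val)

theorem closure_coneSet_subset {N : ℕ} (A : Fin N → SL2) (mu : ℝ) (n : ℕ) :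
    closure (coneSet A mu n) ⊆ weakConeSet A mu n :=
  closure_minimal (fun _ ⟨w', hw', h⟩ => ⟨w', hw', fun w hw => (h w hw).le⟩)
    (isClosed_weakConeSet A mu n)

theorem rate_nil {N : ℕ} (A : Fin N → SL2) (mu : ℝ) (v : Fin 2 → ℝ) : rate A mu [] v = ‖v‖ := by
  simp [rate, wordProd_nil]

/-- The truncation at length `n` does not destroy invariance: thanks to `hs` and `hs'`, the best
contracting word of the inverses can be taken of length `< n`, and words of length `n + 1` of the
`A i` need not be considered; so there is room for one more letter on either side. -/
theorem inCone_mulVec {N : ℕ} {A : Fin N → SL2} {mu m : ℝ} {n : ℕ} (hmu : 1 < mu)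
    (hnb : ∀ v, ‖v‖ = 1 → ∀ w w', rate A mu w v < m → m ≤ rate (fun i => (A i)⁻¹) mu w' v)
    (hs : ∀ w v, n ≤ w.length → ‖v‖ = 1 → rate A mu w v ≤ 1 →
      ∃ w', w'.length < n ∧ rate A mu w' v < m)
    (hs' : ∀ w v, n ≤ w.length → ‖v‖ = 1 → rate (fun i => (A i)⁻¹) mu w v ≤ 1 →
      ∃ w', w'.length < n ∧ rate (fun i => (A i)⁻¹) mu w' v < m)
    {v : Fin 2 → ℝ} (hv : ‖v‖ = 1) (h : InWeakCone A mu n v) (i : Fin N) :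
    InCone A mu n ((A i).1 *ᵥ v) := by
  have hmu0 : 0 < mu := by linarith
  have key : ∃ w' : List (Fin N), w'.length < n ∧ ∀ w : List (Fin N), w.length ≤ n + 1 →
      rate (fun i => (A i)⁻¹) mu w' v ≤ rate A mu w v := by
    have hshort : (∃ w' : List (Fin N), w'.length < n ∧ rate (fun i => (A i)⁻¹) mu w' v < m) →
        ∃ w' : List (Fin N), w'.length < n ∧ ∀ w : List (Fin N), w.length ≤ n + 1 →
          rate (fun i => (A i)⁻¹) mu w' v ≤ rate A mu w v := by
      rintro ⟨w', hw', h'⟩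
      refine ⟨w', hw', fun w _ => ?_⟩
      by_contra! hlt
      exact absurd (hnb v hv w w' (hlt.trans h')) (not_le.2 h')
    obtain ⟨w', hw', hle⟩ := h
    have h1 : rate (fun i => (A i)⁻¹) mu w' v ≤ 1 := by
      simpa [rate_nil, hv] using hle [] (by simp)
    rcases hw'.eq_or_lt with heq | hlt
    · exact hshort (hs' w' v heq.ge hv h1)
    by_cases hm : rate (fun i => (A i)⁻¹) mu w' v < m
    · exact hshort ⟨w', hlt, hm⟩
    refine ⟨w', hlt, fun w hw => ?_⟩
    by_contra! hlt'
    by_cases hwn : w.length ≤ n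
    · exact absurd (hle w hwn) (not_le.2 hlt')
    obtain ⟨u, hu, hum⟩ := hs w v (by omega) hv (hlt'.le.trans h1)
    linarith [hle u hu.le]
  obtain ⟨w', hw', hle⟩ := key
  refine ⟨i :: w', by simpa using hw', fun w hw => ?_⟩
  have h1 := hle (i :: w) (by simpa using hw)
  rw [rate_cons A hmu] at h1
  rw [rate_cons _ hmu, inv_mulVec_mulVec]
  have hpos : 0 < rate A mu w ((A i).1 *ᵥ v) := by
    have hv0 : v ≠ 0 := by rintro rfl; simp at hv
    have := mulVec_ne_zero (wordProd A w) (mulVec_ne_zero (A i) hv0)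
    exact div_pos (norm_pos_iff.2 this) (by positivity)
  rw [div_lt_iff₀ hmu0]
  refine h1.trans_lt ?_
  rw [div_lt_iff₀ hmu0]
  nlinarith [mul_pos hpos hmu0]

open Filter Topology in
theorem UnifGrowth.exists_rate_lt {N : ℕ} {A : Fin N → SL2} {c lam R mu : ℝ}
    (h : UnifGrowth A c lam R) (hmu : 1 < mu) (i : Fin N) {m : ℝ} (hm : 0 < m) (n : ℕ) :
    ∃ w v, n ≤ w.length ∧ ‖v‖ = 1 ∧ rate A mu w v < m := by
  have hc := h.c_pos
  have hlam0 : 0 < lam := by linarith [h.one_lt]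
  obtain ⟨k, hkn, hk⟩ := ((eventually_ge_atTop n).and
    ((tendsto_pow_atTop_atTop_of_one_lt h.one_lt).eventually_gt_atTop (1 / (c * m)))).exists
  obtain ⟨s, hs, hs'⟩ := exists_contracted (wordProd A (List.replicate k i))
  refine ⟨List.replicate k i, s, by simpa using hkn, hs, ?_⟩
  have h1 := h.growth (List.replicate k i)
  rw [List.length_replicate] at h1
  have h2 : 1 / (c * lam ^ k) < m := by
    rw [div_lt_iff₀ (by positivity)] at hk ⊢
    linarith
  calc rate A mu (List.replicate k i) s ≤ ‖(wordProd A (List.replicate k i)).1 *ᵥ s‖ :=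
        div_le_self (norm_nonneg _) (one_le_pow₀ hmu.le)
    _ ≤ 1 / (c * lam ^ k) := hs'.trans (by gcongr)
    _ < m := h2

theorem exists_isOpen_closure_ne_univ : ∃ M : Set P1, M.Nonempty ∧ IsOpen M ∧
    closure M ≠ Set.univ := by
  have h0 : (![1, 0] : Fin 2 → ℝ) ≠ 0 := fun h => by simpa using congrFun h 0
  have h1 : (![0, 1] : Fin 2 → ℝ) ≠ 0 := fun h => by simpa using congrFun h 1
  have hne : Projectivization.mk ℝ _ h0 ≠ Projectivization.mk ℝ _ h1 := by
    rw [Ne, Projectivization.mk_eq_mk_iff']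
    rintro ⟨a, ha⟩
    simpa using congrFun ha 0
  obtain ⟨U, V, hU, hV, hxU, hyV, hUV⟩ := t2_separation hne
  refine ⟨U, ⟨_, hxU⟩, hU, fun h => ?_⟩
  have := (hUV.closure_left hV).le_bot ⟨h ▸ Set.mem_univ _, hyV⟩
  exact this

/-- The multicone is `coneSet A mu n`. It contains the directions contracted by a long word of the
inverses, and its closure omits those contracted by a long word of the `A i`. -/
theorem UnifHyp.exists_multicone {N : ℕ} {A : Fin N → SL2} (h : UnifHyp A) :
    ∃ M : Set P1, M.Nonempty ∧ IsOpen M ∧ closure M ≠ Set.univ ∧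
      ∀ i, projAct (A i) '' closure M ⊆ M := by
  rcases isEmpty_or_nonempty (Fin N) with hN | ⟨⟨i⟩⟩
  · obtain ⟨M, h1, h2, h3⟩ := exists_isOpen_closure_ne_univ
    exact ⟨M, h1, h2, h3, fun i => hN.elim i⟩
  obtain ⟨c, lam, R, h⟩ := h.exists_unifGrowth
  obtain ⟨mu, hmu, hmul⟩ := exists_between h.one_lt
  obtain ⟨m, hm, hm1, hnb⟩ := h.exists_not_both hmu hmul
  obtain ⟨n1, hn1⟩ := h.exists_short hmu hmul hm
  obtain ⟨n2, hn2⟩ := h.inv.exists_short hmu hmul hm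
  set n := max n1 n2
  have hs : ∀ w v, n ≤ w.length → ‖v‖ = 1 → rate A mu w v ≤ 1 →
      ∃ w', w'.length < n ∧ rate A mu w' v < m := fun w v hw hv hwv => by
    obtain ⟨w', h1, h2⟩ := hn1 w v (by omega) hv hwv
    exact ⟨w', by omega, h2⟩
  have hs' : ∀ w v, n ≤ w.length → ‖v‖ = 1 → rate (fun i => (A i)⁻¹) mu w v ≤ 1 →
      ∃ w', w'.length < n ∧ rate (fun i => (A i)⁻¹) mu w' v < m := fun w v hw hv hwv => by
    obtain ⟨w', h1, h2⟩ := hn2 w v (by omega) hv hwv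
    exact ⟨w', by omega, h2⟩
  have hne : ∀ v : Fin 2 → ℝ, ‖v‖ = 1 → v ≠ 0 := by
    rintro v hv rfl
    simp at hv
  refine ⟨coneSet A mu n, ?_, isOpen_coneSet A mu n, ?_, ?_⟩
  · obtain ⟨w, v, hw, hv, hwv⟩ := h.inv.exists_rate_lt hmu i hm n
    obtain ⟨w', hw', hw'v⟩ := hs' w v hw hv (hwv.le.trans hm1)
    refine ⟨_, (mk_mem_coneSet A mu n (hne v hv)).2 ⟨w', hw'.le, fun u _ => ?_⟩⟩
    by_contra! hle
    exact absurd (hnb v hv u w' (hle.trans_lt hw'v)) (not_le.2 hw'v)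
  · obtain ⟨w, v, hw, hv, hwv⟩ := h.exists_rate_lt hmu i hm n
    obtain ⟨w', hw', hw'v⟩ := hs w v hw hv (hwv.le.trans hm1)
    intro huniv
    have hmem := closure_coneSet_subset A mu n
      (huniv ▸ Set.mem_univ (Projectivization.mk ℝ v (hne v hv)))
    rw [mk_mem_weakConeSet] at hmem
    obtain ⟨u, -, hu⟩ := hmem
    linarith [hu w' hw'.le, hnb v hv w' u hw'v]
  · rintro i _ ⟨x, hx, rfl⟩
    obtain ⟨v, hv, rfl⟩ := exists_mk_eq x
    have hx' := closure_coneSet_subset A mu n hx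
    rw [mk_mem_weakConeSet] at hx'
    have ht : ‖v‖⁻¹ ≠ 0 := inv_ne_zero (norm_ne_zero_iff.2 hv)
    have hunit : ‖‖v‖⁻¹ • v‖ = 1 := by
      rw [norm_smul, norm_inv, norm_norm, inv_mul_cancel₀ (norm_ne_zero_iff.2 hv)]
    rw [← inWeakCone_smul A mu n ht] at hx'
    have := inCone_mulVec hmu hnb hs hs' hunit hx' i
    rw [Matrix.mulVec_smul, inCone_smul A mu n ht] at this
    rw [projAct_mk, mk_mem_coneSet]
    exact this

/-- Trimming a multicone, without losing the compact set of images of its closure, leaves finitely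
many components with pairwise disjoint closures. -/
theorem UnifHyp.exists_multicone_finComp {N : ℕ} {A : Fin N → SL2} (h : UnifHyp A) :
    ∃ M : Set P1, M.Nonempty ∧ IsOpen M ∧ closure M ≠ Set.univ ∧
      (∀ i, projAct (A i) '' closure M ⊆ M) ∧ FinCompDisjClosures M := by
  obtain ⟨M, ⟨x, hx⟩, hM, hcl, hinv⟩ := h.exists_multicone
  -- The point `x` only serves to keep the trimmed set nonempty when there are no matrices.
  obtain ⟨M', hM', hLM', hM'M, hfin⟩ :=
    exists_finComp (L := (⋃ i, projAct (A i) '' closure M) ∪ {x}) (M := M)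
      ((isClosed_iUnion_image A M).union isClosed_singleton).isCompact hM
      (Set.union_subset (Set.iUnion_subset hinv) (Set.singleton_subset_iff.2 hx))
  have hsub := closure_mono hM'M
  refine ⟨M', ⟨x, hLM' (Or.inr rfl)⟩, hM', fun hu => hcl ?_, fun i => ?_, hfin⟩
  · exact Set.univ_subset_iff.1 (hu ▸ hsub)
  · exact (Set.image_mono hsub).trans
      ((Set.subset_iUnion (fun i => projAct (A i) '' closure M) i).trans
        (Set.subset_union_left.trans hLM'))

/-- **Multicone criterion for the full shift** (Theorem A / Theorem 2.2 of
Avila–Bochi–Yoccoz): an `N`-tuple is uniformly hyperbolic w.r.t. the full shift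
iff it admits a multicone; moreover the multicone can be chosen to have finitely
many connected components with pairwise disjoint closures. -/
theorem multicone_full_shift {N : ℕ} (A : Fin N → SL2) :
    (UnifHyp A ↔
      ∃ M : Set P1, M.Nonempty ∧ IsOpen M ∧ closure M ≠ Set.univ ∧
        ∀ α : Fin N, projAct (A α) '' closure M ⊆ M) ∧
    (UnifHyp A →
      ∃ M : Set P1, M.Nonempty ∧ IsOpen M ∧ closure M ≠ Set.univ ∧
        (∀ α : Fin N, projAct (A α) '' closure M ⊆ M) ∧
        FinCompDisjClosures M) := by
  exact ⟨⟨fun h => h.exists_multicone, fun ⟨_, h1, h2, h3, h4⟩ =>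
    unifHyp_of_multicone A h1 h2 h3 h4⟩, fun h => h.exists_multicone_finComp⟩
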